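/- arXiv:2311.13883 — 4 statements merged into one kernel-verified Lean document; each statement's English description precedes it below -/
import Mathlib

section
/- Let K ⊂ ℝ^d be a compact set, let F : P_2(K) → ℝ be lower semicontinuous with respect to weak convergence of probability measures, let τ > 0 and let μ_k ∈ P_2(K). Then the functional μ ↦ SW_2²(μ, μ_k)/(2τ) + F(μ) attains its minimum over P_2(K), i.e. the SW-JKO step admits a minimizer. -/
open MeasureTheory ENNReal Metric Filter
open scoped RealInnerProductSpace NNReal

noncomputable section

/-- `ℝ^d` as a Euclidean space. -/
abbrev Ed (d : ℕ) : Type := EuclideanSpace ℝ (Fin d)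

/-- `π` is a coupling of `μ` and `ν`. -/
def IsCoupling {E : Type*} [MeasurableSpace E] (π : Measure (E × E)) (μ ν : Measure E) : Prop :=
  π.map Prod.fst = μ ∧ π.map Prod.snd = ν

/-- Squared 2-Wasserstein distance. -/
def W2sq {E : Type*} [MeasurableSpace E] [NormedAddCommGroup E] (μ ν : Measure E) : ℝ≥0∞ :=
  ⨅ (π : Measure (E × E)) (_ : IsCoupling π μ ν), ∫⁻ p, (‖p.1 - p.2‖₊ : ℝ≥0∞) ^ 2 ∂π

/-- The uniform probability measure on the unit sphere `S^{d-1}`. -/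
def unifSphere (d : ℕ) : Measure (sphere (0 : Ed d) 1) :=
  ((volume : Measure (Ed d)).toSphere Set.univ)⁻¹ • (volume : Measure (Ed d)).toSphere

/-- Projection `P^θ(x) = ⟨x, θ⟩`. -/
def proj {d : ℕ} (θ : Ed d) (x : Ed d) : ℝ := ⟪x, θ⟫

/-- Squared Sliced-Wasserstein distance. -/
def SW2sq {d : ℕ} (μ ν : Measure (Ed d)) : ℝ≥0∞ :=
  ∫⁻ θ : sphere (0 : Ed d) 1,
    W2sq (μ.map (proj (θ : Ed d))) (ν.map (proj (θ : Ed d))) ∂(unifSphere d)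

/-- Sliced-Wasserstein distance. -/
def SW2 {d : ℕ} (μ ν : Measure (Ed d)) : ℝ := Real.sqrt (SW2sq μ ν).toReal

/-- Finite second moment. -/
def FiniteSecondMoment {d : ℕ} (μ : Measure (Ed d)) : Prop :=
  ∫⁻ x, (‖x‖₊ : ℝ≥0∞) ^ 2 ∂μ < ∞

/-- `μ ∈ P_2(K)`: probability measure supported in `K` with finite second moment. -/
def MemP2 {d : ℕ} (K : Set (Ed d)) (μ : Measure (Ed d)) : Prop :=
  IsProbabilityMeasure μ ∧ μ Kᶜ = 0 ∧ FiniteSecondMoment μ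

lemma aux_lift {A B : Type*} [MeasurableSpace A] [MeasurableSpace B] {g : A → B}
    (hg : MeasurableEmbedding g) (ρ : Measure B) [IsProbabilityMeasure ρ]
    (h : ρ (Set.range g)ᶜ = 0) :
    ∃ m : ProbabilityMeasure A, (m : Measure A).map g = ρ := by
  have h1 : (ρ.comap g).map g = ρ := by
    rw [hg.map_comap, Measure.restrict_eq_self_of_ae_mem]
    exact h
  have h2 : IsProbabilityMeasure (ρ.comap g) := by
    constructor
    have : (ρ.comap g).map g Set.univ = 1 := by rw [h1]; exact measure_univ
    rwa [hg.map_apply, Set.preimage_univ] at this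
  exact ⟨⟨ρ.comap g, h2⟩, h1⟩

abbrev YI (R : ℝ) : Type := Set.Icc (-R) R

def cst (R : ℝ) : BoundedContinuousFunction (YI R × YI R) ℝ≥0 :=
  BoundedContinuousFunction.mkOfCompact
    ⟨fun p => ‖(p.1 : ℝ) - (p.2 : ℝ)‖₊ ^ 2, by fun_prop⟩

lemma emb_YI (R : ℝ) : MeasurableEmbedding (Prod.map (Subtype.val : YI R → ℝ) (Subtype.val : YI R → ℝ)) :=
  (MeasurableEmbedding.subtype_coe measurableSet_Icc).prodMap
    (MeasurableEmbedding.subtype_coe measurableSet_Icc)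

lemma cost_map (R : ℝ) (π : Measure (YI R × YI R)) :
    ∫⁻ p, (‖p.1 - p.2‖₊ : ℝ≥0∞) ^ 2 ∂(π.map (Prod.map Subtype.val Subtype.val) : Measure (ℝ × ℝ))
      = ∫⁻ p, (cst R p : ℝ≥0∞) ∂π := by
  rw [(emb_YI R).lintegral_map]
  simp [cst]

lemma coupling_map (R : ℝ) (π : Measure (YI R × YI R)) :
    IsCoupling (π.map (Prod.map Subtype.val Subtype.val) : Measure (ℝ × ℝ))
      ((π.map Prod.fst).map Subtype.val) ((π.map Prod.snd).map Subtype.val) := by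
  constructor
  · rw [Measure.map_map measurable_fst (emb_YI R).measurable,
      Measure.map_map measurable_subtype_coe measurable_fst]; rfl
  · rw [Measure.map_map measurable_snd (emb_YI R).measurable,
      Measure.map_map measurable_subtype_coe measurable_snd]; rfl

def wY (R : ℝ) (p : ProbabilityMeasure (YI R) × ProbabilityMeasure (YI R)) : ℝ≥0∞ :=
  W2sq ((p.1 : Measure (YI R)).map Subtype.val) ((p.2 : Measure (YI R)).map Subtype.val)

def marg (R : ℝ) (π : ProbabilityMeasure (YI R × YI R)) :
    ProbabilityMeasure (YI R) × ProbabilityMeasure (YI R) :=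
  (π.map measurable_fst.aemeasurable, π.map measurable_snd.aemeasurable)

lemma marg_cont (R : ℝ) : Continuous (marg R) :=
  (ProbabilityMeasure.continuous_map continuous_fst).prodMk
    (ProbabilityMeasure.continuous_map continuous_snd)

lemma val_inj {A B : Type*} [MeasurableSpace A] [MeasurableSpace B] {g : A → B}
    (hg : MeasurableEmbedding g) {μ ν : Measure A} (h : μ.map g = ν.map g) : μ = ν := by
  rw [← hg.comap_map μ, h, hg.comap_map]

lemma wY_lt (R : ℝ) (p) (c : ℝ≥0∞) (h : wY R p < c) :
    ∃ π : ProbabilityMeasure (YI R × YI R), marg R π = p ∧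
      ∫⁻ q, (cst R q : ℝ≥0∞) ∂(π : Measure (YI R × YI R)) < c := by
  have hv : MeasurableEmbedding (Subtype.val : YI R → ℝ) :=
    MeasurableEmbedding.subtype_coe measurableSet_Icc
  obtain ⟨p1, p2⟩ := p
  simp only [wY, W2sq, iInf_lt_iff] at h
  obtain ⟨ρ, ⟨h1, h2⟩, hc⟩ := h
  have hpr : IsProbabilityMeasure ρ := by
    have : IsProbabilityMeasure (ρ.map Prod.fst) := by
      rw [h1]; exact Measure.isProbabilityMeasure_map measurable_subtype_coe.aemeasurable
    exact Measure.isProbabilityMeasure_of_map Prod.fst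
  have hz : ∀ q : ProbabilityMeasure (YI R),
      ((q : Measure (YI R)).map Subtype.val) (Set.Icc (-R) R)ᶜ = 0 := by
    intro q
    rw [hv.map_apply]
    simp
  have hr : ρ (Set.range (Prod.map (Subtype.val : YI R → ℝ) (Subtype.val : YI R → ℝ)))ᶜ = 0 := by
    rw [Set.range_prodMap, Subtype.range_coe, Set.compl_prod_eq_union]
    refine measure_union_null ?_ ?_
    · have := hz p1
      rw [← h1, Measure.map_apply measurable_fst measurableSet_Icc.compl] at this
      convert this using 2
      ext; simp
    · have := hz p2
      rw [← h2, Measure.map_apply measurable_snd measurableSet_Icc.compl] at this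
      convert this using 2
      ext; simp
  obtain ⟨π, hπ⟩ := aux_lift (emb_YI R) ρ hr
  have hcm := coupling_map R π
  rw [hπ] at hcm
  refine ⟨π, ?_, ?_⟩
  · refine Prod.ext ?_ ?_
    · apply ProbabilityMeasure.toMeasure_injective
      exact val_inj hv (hcm.1.symm.trans h1)
    · apply ProbabilityMeasure.toMeasure_injective
      exact val_inj hv (hcm.2.symm.trans h2)
  · rw [← cost_map, hπ]; exact hc

lemma wY_le (R : ℝ) (π : ProbabilityMeasure (YI R × YI R)) :
    wY R (marg R π) ≤ ∫⁻ q, (cst R q : ℝ≥0∞) ∂(π : Measure (YI R × YI R)) := by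
  rw [← cost_map]
  exact iInf₂_le (f := fun (π : Measure (ℝ × ℝ)) (_ : IsCoupling π _ _) =>
    ∫⁻ p, (‖p.1 - p.2‖₊ : ℝ≥0∞) ^ 2 ∂π) _ (coupling_map R π)

lemma wY_lsc (R : ℝ) : LowerSemicontinuous (wY R) := by
  rw [lowerSemicontinuous_iff_isClosed_preimage]
  intro c
  have : wY R ⁻¹' Set.Iic c = ⋂ c' : Set.Ioi c, marg R ''
      {π | ∫⁻ q, (cst R q : ℝ≥0∞) ∂(π : Measure (YI R × YI R)) ≤ c'} := by
    ext p
    simp only [Set.mem_preimage, Set.mem_Iic, Set.mem_iInter, Set.mem_image, Set.mem_ofPred_eq]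
    constructor
    · rintro h ⟨c', hc'⟩
      obtain ⟨π, h1, h2⟩ := wY_lt R p c' (h.trans_lt hc')
      exact ⟨π, h2.le, h1⟩
    · intro h
      refine le_of_forall_gt_imp_ge_of_dense fun c' hc' => ?_
      obtain ⟨π, h1, h2⟩ := h ⟨c', hc'⟩
      rw [← h2]
      exact (wY_le R π).trans h1
  rw [this]
  refine isClosed_iInter fun c' => ?_
  refine (IsCompact.image ?_ (marg_cont R)).isClosed
  refine IsClosed.isCompact ?_
  exact isClosed_le
    (ProbabilityMeasure.continuous_lintegral_boundedContinuousFunction (cst R)) continuous_const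

lemma wY_bdd (R : ℝ) (p) : wY R p ≤ (nndist (cst R) 0 : ℝ≥0∞) := by
  obtain ⟨p1, p2⟩ := p
  have hm : marg R (p1.prod p2) = (p1, p2) := by
    refine Prod.ext ?_ ?_
    · apply ProbabilityMeasure.toMeasure_injective
      simp [marg]
    · apply ProbabilityMeasure.toMeasure_injective
      simp [marg]
  rw [← hm]
  refine (wY_le R _).trans ?_
  refine (lintegral_mono (g := fun _ => (nndist (cst R) 0 : ℝ≥0∞)) fun q => ?_).trans ?_
  · have := BoundedContinuousFunction.NNReal.upper_bound (cst R) q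
    exact ENNReal.coe_le_coe.2 this
  · simp

section main

variable {d : ℕ} {K : Set (Ed d)} {R : ℝ} (hR : ∀ x ∈ K, ‖x‖ ≤ R)

include hR in
lemma proj_mem (θ : sphere (0 : Ed d) 1) (x : K) : proj (θ : Ed d) x ∈ Set.Icc (-R) R := by
  rw [Set.mem_Icc, ← abs_le]
  refine (abs_real_inner_le_norm _ _).trans ?_
  have : ‖(θ : Ed d)‖ = 1 := by simp
  rw [this, mul_one]
  exact hR x x.2

def pK (θ : sphere (0 : Ed d) 1) (x : K) : YI R := ⟨proj (θ : Ed d) x, proj_mem hR θ x⟩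

lemma pK_cont : Continuous (fun z : sphere (0 : Ed d) 1 × K => pK hR z.1 z.2) := by
  unfold pK proj
  fun_prop

lemma pK_cont1 (θ) : Continuous (pK hR θ) := (pK_cont hR).comp (Continuous.prodMk_right θ)
lemma pK_cont2 (x) : Continuous (fun θ => pK hR θ x) :=
  (pK_cont hR).comp (Continuous.prodMk_left x)

def mK (θ : sphere (0 : Ed d) 1) (m : ProbabilityMeasure K) : ProbabilityMeasure (YI R) :=
  m.map (pK_cont1 hR θ).measurable.aemeasurable

lemma mK_cont1 (θ) : Continuous (mK hR θ) :=
  ProbabilityMeasure.continuous_map (pK_cont1 hR θ)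

lemma mK_cont2 (m) : Continuous (fun θ => mK hR θ m) := by
  rw [continuous_iff_continuousAt]
  intro θ
  rw [ContinuousAt, ProbabilityMeasure.tendsto_iff_forall_integral_tendsto]
  intro f
  have key : ∀ θ, ∫ y, f y ∂(mK hR θ m : Measure (YI R)) = ∫ x, f (pK hR θ x) ∂(m : Measure K) := by
    intro θ
    exact integral_map (pK_cont1 hR θ).measurable.aemeasurable
      f.continuous.measurable.aestronglyMeasurable
  simp only [key]
  refine tendsto_integral_filter_of_dominated_convergence (fun _ => ‖f‖) ?_ ?_ ?_ ?_
  · exact Eventually.of_forall fun θ =>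
      (f.continuous.comp (pK_cont1 hR θ)).measurable.aestronglyMeasurable
  · exact Eventually.of_forall fun θ => Eventually.of_forall fun x => f.norm_coe_le_norm _
  · exact integrable_const _
  · exact Eventually.of_forall fun x => (f.continuous.comp (pK_cont2 hR x)).tendsto θ

lemma mK_val (θ : sphere (0 : Ed d) 1) (m : ProbabilityMeasure K) :
    (mK hR θ m : Measure (YI R)).map Subtype.val =
      ((m : Measure K).map Subtype.val).map (proj (θ : Ed d)) := by
  have hp : Measurable (proj (θ : Ed d)) := by
    have : Continuous (proj (θ : Ed d)) := by unfold proj; fun_prop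
    exact this.measurable
  rw [Measure.map_map hp measurable_subtype_coe]
  exact Measure.map_map measurable_subtype_coe (pK_cont1 hR θ).measurable

lemma SW_eq (m n : ProbabilityMeasure K) :
    SW2sq ((m : Measure K).map Subtype.val) ((n : Measure K).map Subtype.val) =
      ∫⁻ θ, wY R (mK hR θ m, mK hR θ n) ∂(unifSphere d) := by
  simp only [SW2sq, wY, mK_val]

include hR in
lemma SW_fin (m n : ProbabilityMeasure K) :
    SW2sq ((m : Measure K).map Subtype.val) ((n : Measure K).map Subtype.val) ≠ ∞ := by
  rw [SW_eq hR]
  refine ne_top_of_le_ne_top ?_ (lintegral_mono fun θ => wY_bdd R _)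
  rw [lintegral_const]
  refine ENNReal.mul_ne_top ENNReal.coe_ne_top ?_
  refine ne_top_of_le_ne_top ENNReal.one_ne_top ?_
  simp only [unifSphere, Measure.smul_apply, smul_eq_mul]
  exact ENNReal.inv_mul_le_one _

include hR in
lemma SW_lsc (n : ProbabilityMeasure K) :
    LowerSemicontinuous fun m : ProbabilityMeasure K =>
      SW2sq ((m : Measure K).map Subtype.val) ((n : Measure K).map Subtype.val) := by
  rw [lowerSemicontinuous_iff_le_liminf]
  intro m
  simp only [SW_eq hR]
  refine le_trans (lintegral_mono fun θ => ?_) (lintegral_liminf_le fun m' => ?_)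
  · have : LowerSemicontinuous fun m' => wY R (mK hR θ m', mK hR θ n) :=
      (wY_lsc R).comp ((mK_cont1 hR θ).prodMk continuous_const)
    exact this.le_liminf m
  · have : LowerSemicontinuous fun θ => wY R (mK hR θ m', mK hR θ n) :=
      (wY_lsc R).comp ((mK_cont2 hR m').prodMk (mK_cont2 hR n))
    exact this.measurable

end main

/-- For K compact and F lower semicontinuous w.r.t. weak convergence of
probability measures, the SW-JKO step attains its minimum over P_2(K). -/
theorem swjko_step_exists_minimizer (d : ℕ) (K : Set (Ed d)) (hK : IsCompact K)
    (F : ProbabilityMeasure (Ed d) → ℝ)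
    (hF : LowerSemicontinuousOn F {μ : ProbabilityMeasure (Ed d) | MemP2 K μ.toMeasure})
    (τ : ℝ) (hτ : 0 < τ)
    (μk : ProbabilityMeasure (Ed d)) (hμk : MemP2 K μk.toMeasure) :
    ∃ μ : ProbabilityMeasure (Ed d), MemP2 K μ.toMeasure ∧
      ∀ ν : ProbabilityMeasure (Ed d), MemP2 K ν.toMeasure →
        (SW2sq μ.toMeasure μk.toMeasure).toReal / (2 * τ) + F μ ≤
          (SW2sq ν.toMeasure μk.toMeasure).toReal / (2 * τ) + F ν := by
  obtain ⟨R, hR⟩ := hK.isBounded.exists_norm_le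
  have hKm : MeasurableSet K := hK.measurableSet
  have : CompactSpace K := isCompact_iff_compactSpace.mp hK
  have hv : MeasurableEmbedding (Subtype.val : K → Ed d) := MeasurableEmbedding.subtype_coe hKm
  let J : ProbabilityMeasure K → ProbabilityMeasure (Ed d) :=
    fun m => m.map measurable_subtype_coe.aemeasurable
  have hJc : Continuous J := ProbabilityMeasure.continuous_map continuous_subtype_val
  have hJm : ∀ m : ProbabilityMeasure K,
      (J m : Measure (Ed d)) = (m : Measure K).map Subtype.val := fun _ => rfl
  have hJmem : ∀ m, MemP2 K (J m : Measure (Ed d)) := by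
    intro m
    refine ⟨inferInstance, ?_, ?_⟩
    · rw [hJm, hv.map_apply]; simp
    · rw [FiniteSecondMoment, hJm, hv.lintegral_map]
      refine (lintegral_mono (g := fun _ => ENNReal.ofReal R ^ 2) fun x => ?_).trans_lt ?_
      · have : (‖(x : Ed d)‖₊ : ℝ≥0∞) ≤ ENNReal.ofReal R := by
          rw [← ENNReal.ofReal_coe_nnreal]
          exact ENNReal.ofReal_le_ofReal (hR x x.2)
        exact pow_le_pow_left' this 2
      · simp
  have hJs : ∀ ν : ProbabilityMeasure (Ed d), MemP2 K ν.toMeasure → ∃ m, J m = ν := by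
    rintro ν ⟨_, h, _⟩
    obtain ⟨m, hm⟩ := aux_lift hv (ν : Measure (Ed d)) (by rwa [Subtype.range_coe])
    exact ⟨m, ProbabilityMeasure.toMeasure_injective hm⟩
  obtain ⟨n, rfl⟩ := hJs μk hμk
  have hFJ : LowerSemicontinuous (fun m => F (J m)) := by
    rw [← lowerSemicontinuousOn_univ_iff]
    exact hF.comp hJc.continuousOn (fun m _ => hJmem m)
  have hS : LowerSemicontinuous fun m : ProbabilityMeasure K =>
      (SW2sq (J m).toMeasure (J n).toMeasure).toReal / (2 * τ) := by
    rw [lowerSemicontinuous_iff_isClosed_preimage]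
    intro c
    rcases lt_or_ge c 0 with hc | hc
    · convert isClosed_empty
      ext m
      simp only [Set.mem_preimage, Set.mem_Iic, Set.mem_empty_iff_false, iff_false, not_le]
      exact hc.trans_le (by positivity)
    · convert (lowerSemicontinuous_iff_isClosed_preimage.1 (SW_lsc hR n)) (ENNReal.ofReal (c * (2 * τ)))
        using 1
      ext m
      simp only [Set.mem_preimage, Set.mem_Iic]
      rw [div_le_iff₀ (by positivity)]
      exact (ENNReal.le_ofReal_iff_toReal_le (SW_fin hR m n) (by positivity)).symm
  obtain ⟨m, _, hm⟩ := ((hS.add hFJ).lowerSemicontinuousOn Set.univ).exists_isMinOn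
    ⟨n, Set.mem_univ _⟩ isCompact_univ
  refine ⟨J m, hJmem m, fun ν hν => ?_⟩
  obtain ⟨m', rfl⟩ := hJs ν hν
  exact hm (Set.mem_univ m')
end
end

section
/- Let K ⊂ ℝ^d be a compact set, let F : P_2(K) → ℝ be lower semicontinuous and convex, let τ > 0, and let μ_k ∈ P_2(K) be absolutely continuous with respect to the Lebesgue measure. Then the functional μ ↦ SW_2²(μ, μ_k)/(2τ) + F(μ) has a unique minimizer over P_2(K). -/
open MeasureTheory ENNReal Metric Filter
open scoped RealInnerProductSpace NNReal

noncomputable section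

section helpers
open Set ProbabilityTheory
open scoped Topology

def wd (μ ν : Measure ℝ) (p : ℝ × ℝ) : ℝ≥0∞ :=
  (μ (Iic (min p.1 p.2)) - ν (Iic (max p.1 p.2))) +
    (ν (Iic (min p.1 p.2)) - μ (Iic (max p.1 p.2)))

lemma sq_eq_lintegral (x y : ℝ) : ((‖x - y‖₊ : ℝ≥0∞)) ^ 2 =
    ∫⁻ p : ℝ × ℝ, (if x ≤ min p.1 p.2 ∧ max p.1 p.2 < y then 1 else 0) +
      (if y ≤ min p.1 p.2 ∧ max p.1 p.2 < x then 1 else 0) := by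
  have key : ∀ a b : ℝ, (fun p : ℝ × ℝ => (if a ≤ min p.1 p.2 ∧ max p.1 p.2 < b then (1:ℝ≥0∞) else 0))
      = (Ico a b ×ˢ Ico a b).indicator 1 := by
    intro a b
    ext p
    simp only [indicator, mem_prod, mem_Ico, le_min_iff, max_lt_iff, Pi.one_apply]
    congr 1
    apply propext; tauto
  have hm : ∀ a b : ℝ, MeasurableSet (Ico a b ×ˢ Ico a b) := fun a b =>
    measurableSet_Ico.prod measurableSet_Ico
  have hk : ∀ a b : ℝ, ∫⁻ p : ℝ × ℝ, (if a ≤ min p.1 p.2 ∧ max p.1 p.2 < b then (1:ℝ≥0∞) else 0)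
      = ENNReal.ofReal (b - a) ^ 2 := by
    intro a b
    rw [key, lintegral_indicator_one (hm a b), Measure.volume_eq_prod, Measure.prod_prod,
      Real.volume_Ico, sq]
  rw [lintegral_add_left, hk, hk]
  · rw [← enorm_eq_nnnorm, Real.enorm_eq_ofReal_abs]
    rcases le_total x y with h | h
    · rw [ENNReal.ofReal_of_nonpos (sub_nonpos.2 h), abs_of_nonpos (sub_nonpos.2 h)]
      simp
    · rw [ENNReal.ofReal_of_nonpos (sub_nonpos.2 h), abs_of_nonneg (sub_nonneg.2 h)]
      simp
  · rw [key]
    exact measurable_one.indicator (hm x y)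

lemma lintegral_cost (π : Measure (ℝ × ℝ)) [SFinite π] :
    ∫⁻ z, (‖z.1 - z.2‖₊ : ℝ≥0∞) ^ 2 ∂π = ∫⁻ p : ℝ × ℝ,
      π {z | z.1 ≤ min p.1 p.2 ∧ max p.1 p.2 < z.2} +
      π {z | z.2 ≤ min p.1 p.2 ∧ max p.1 p.2 < z.1} := by
  have h1 : MeasurableSet {q : (ℝ × ℝ) × (ℝ × ℝ) | q.1.1 ≤ min q.2.1 q.2.2 ∧ max q.2.1 q.2.2 < q.1.2} := by
    rw [Set.ofPred_and]; exact (measurableSet_le (by fun_prop) (by fun_prop)).inter (measurableSet_lt (by fun_prop) (by fun_prop))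
  have h2 : MeasurableSet {q : (ℝ × ℝ) × (ℝ × ℝ) | q.1.2 ≤ min q.2.1 q.2.2 ∧ max q.2.1 q.2.2 < q.1.1} := by
    rw [Set.ofPred_and]; exact (measurableSet_le (by fun_prop) (by fun_prop)).inter (measurableSet_lt (by fun_prop) (by fun_prop))
  simp_rw [sq_eq_lintegral]
  have m1 : Measurable (fun q : (ℝ × ℝ) × (ℝ × ℝ) =>
    (if q.1.1 ≤ min q.2.1 q.2.2 ∧ max q.2.1 q.2.2 < q.1.2 then (1:ℝ≥0∞) else 0)) :=
    Measurable.ite h1 measurable_const measurable_const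
  have m2 : Measurable (fun q : (ℝ × ℝ) × (ℝ × ℝ) =>
    (if q.1.2 ≤ min q.2.1 q.2.2 ∧ max q.2.1 q.2.2 < q.1.1 then (1:ℝ≥0∞) else 0)) :=
    Measurable.ite h2 measurable_const measurable_const
  rw [lintegral_lintegral_swap (m1.add m2).aemeasurable]
  congr 1
  ext p
  have s1 : MeasurableSet {z : ℝ × ℝ | z.1 ≤ min p.1 p.2 ∧ max p.1 p.2 < z.2} :=
    h1.preimage (measurable_prodMk_right (y := p))
  have s2 : MeasurableSet {z : ℝ × ℝ | z.2 ≤ min p.1 p.2 ∧ max p.1 p.2 < z.1} :=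
    h2.preimage (measurable_prodMk_right (y := p))
  have m3 : Measurable (fun z : ℝ × ℝ =>
    (if z.1 ≤ min p.1 p.2 ∧ max p.1 p.2 < z.2 then (1:ℝ≥0∞) else 0)) :=
    m1.comp (measurable_prodMk_right (y := p))
  rw [lintegral_add_left m3,
    ← lintegral_indicator_one s1, ← lintegral_indicator_one s2]
  simp only [indicator, mem_ofPred_eq, Pi.one_apply]

lemma le_W2sq (μ ν : Measure ℝ) [IsProbabilityMeasure μ] [IsProbabilityMeasure ν] :
    ∫⁻ p, wd μ ν p ≤ W2sq μ ν := by
  refine le_iInf₂ fun π hπ => ?_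
  have : IsProbabilityMeasure π := by
    constructor
    have := congrArg (fun m => m univ) hπ.1
    simpa [Measure.map_apply measurable_fst MeasurableSet.univ] using this
  rw [lintegral_cost]
  refine lintegral_mono fun p => ?_
  have e1 : ∀ c, μ (Iic c) = π {z | z.1 ≤ c} := fun c => by
    rw [← hπ.1, Measure.map_apply measurable_fst measurableSet_Iic]; rfl
  have e2 : ∀ c, ν (Iic c) = π {z | z.2 ≤ c} := fun c => by
    rw [← hπ.2, Measure.map_apply measurable_snd measurableSet_Iic]; rfl
  unfold wd
  simp only [e1, e2]
  refine add_le_add ?_ ?_ <;>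
  · refine le_measure_sdiff.trans (measure_mono ?_)
    rintro z ⟨ha, hb⟩
    exact ⟨ha, not_le.1 hb⟩

def qf (μ : Measure ℝ) (u : ℝ) : ℝ := sInf {x | u ≤ cdf μ x}

lemma qf_le_iff (μ : Measure ℝ) {u : ℝ} (hu : u ∈ Ioo (0:ℝ) 1) (s : ℝ) :
    qf μ u ≤ s ↔ u ≤ cdf μ s := by
  have hne : {x | u ≤ cdf μ x}.Nonempty := by
    obtain ⟨x, hx⟩ := ((tendsto_cdf_atTop μ).eventually (lt_mem_nhds hu.2)).exists
    exact ⟨x, hx.le⟩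
  have hbd : BddBelow {x | u ≤ cdf μ x} := by
    obtain ⟨x, hx⟩ := ((tendsto_cdf_atBot μ).eventually (gt_mem_nhds hu.1)).exists
    refine ⟨x, fun y hy => ?_⟩
    by_contra h
    exact absurd (hy.trans (monotone_cdf μ (not_le.1 h).le)) (not_le.2 hx)
  constructor
  · intro h
    have hgt : ∀ y, s < y → u ≤ cdf μ y := by
      intro y hy
      obtain ⟨z, hz, hzy⟩ := exists_lt_of_csInf_lt hne (lt_of_le_of_lt h hy)
      exact le_trans hz (monotone_cdf μ hzy.le)
    have hr : Tendsto (cdf μ) (𝓝[>] s) (𝓝 (cdf μ s)) :=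
      ((cdf μ).right_continuous s).mono_left (nhdsWithin_mono _ Ioi_subset_Ici_self)
    refine ge_of_tendsto hr ?_
    filter_upwards [self_mem_nhdsWithin] with y hy using hgt y hy
  · intro h
    exact csInf_le hbd h

lemma qf_aemeas (μ : Measure ℝ) : AEMeasurable (qf μ) (volume.restrict (Ioo (0:ℝ) 1)) := by
  apply aemeasurable_restrict_of_monotoneOn measurableSet_Ioo
  intro a ha b hb hab
  rw [qf_le_iff μ ha]
  exact hab.trans ((qf_le_iff μ hb _).1 le_rfl)

lemma qf_map (μ : Measure ℝ) [IsProbabilityMeasure μ] :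
    (volume.restrict (Ioo (0:ℝ) 1)).map (qf μ) = μ := by
  have : IsFiniteMeasure (volume.restrict (Ioo (0:ℝ) 1)) := ⟨by simp⟩
  refine Measure.ext_of_Iic _ _ fun s => ?_
  rw [Measure.map_apply_of_aemeasurable (qf_aemeas μ) measurableSet_Iic,
    Measure.restrict_apply' measurableSet_Ioo, ← ofReal_cdf]
  have : qf μ ⁻¹' Iic s ∩ Ioo 0 1 =  Iic (cdf μ s) ∩ Ioo 0 1 := by
    ext u
    simp only [mem_inter_iff, mem_preimage, mem_Iic]
    exact and_congr_left fun hu => qf_le_iff μ hu s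
  rw [this]
  refine le_antisymm ?_ ?_
  · calc volume (Iic (cdf μ s) ∩ Ioo 0 1) ≤ volume (Ioc 0 (cdf μ s)) := measure_mono fun u hu => ⟨hu.2.1, hu.1⟩
      _ = _ := by simp
  · calc _ = volume (Ioo 0 (cdf μ s)) := by simp
      _ ≤ volume (Iic (cdf μ s) ∩ Ioo 0 1) := measure_mono fun u hu => ⟨hu.2.le, hu.1, hu.2.trans_le (cdf_le_one μ s)⟩

lemma W2sq_eq (μ ν : Measure ℝ) [IsProbabilityMeasure μ] [IsProbabilityMeasure ν] :
    W2sq μ ν = ∫⁻ p, wd μ ν p := by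
  refine le_antisymm ?_ (le_W2sq μ ν)
  set L : Measure ℝ := volume.restrict (Ioo (0:ℝ) 1) with hL
  have : IsFiniteMeasure L := ⟨by simp [hL]⟩
  have hm : AEMeasurable (fun u => (qf μ u, qf ν u)) L := (qf_aemeas μ).prodMk (qf_aemeas ν)
  have hc : IsCoupling (L.map (fun u => (qf μ u, qf ν u))) μ ν := by
    constructor
    · rw [AEMeasurable.map_map_of_aemeasurable measurable_fst.aemeasurable hm]
      exact qf_map μ
    · rw [AEMeasurable.map_map_of_aemeasurable measurable_snd.aemeasurable hm]
      exact qf_map ν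
  refine le_trans (b := ∫⁻ p, (‖p.1 - p.2‖₊ : ℝ≥0∞) ^ 2 ∂(L.map (fun u => (qf μ u, qf ν u))))
    (by unfold W2sq; exact iInf₂_le_of_le _ hc le_rfl) ?_
  rw [lintegral_cost]
  refine lintegral_mono fun p => ?_
  have key : ∀ (α β : Measure ℝ) [IsProbabilityMeasure α] [IsProbabilityMeasure β] (a b : ℝ),
      volume ({u | qf α u ≤ a ∧ b < qf β u} ∩ Ioo 0 1) ≤ α (Iic a) - β (Iic b) := by
    intro α β _ _ a b
    rw [← ofReal_cdf, ← ofReal_cdf, ← ENNReal.ofReal_sub _ (cdf_nonneg _ _), ← Real.volume_Ioc]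
    refine measure_mono ?_
    rintro u ⟨⟨h1, h2⟩, h3⟩
    refine ⟨?_, (qf_le_iff α h3 a).1 h1⟩
    by_contra h
    exact absurd ((qf_le_iff β h3 b).2 (not_lt.1 h)) (not_le.2 h2)
  unfold wd
  rw [Measure.map_apply_of_aemeasurable hm, Measure.map_apply_of_aemeasurable hm,
    Measure.restrict_apply' measurableSet_Ioo, Measure.restrict_apply' measurableSet_Ioo]
  · refine add_le_add (key μ ν _ _) (le_trans (measure_mono ?_) (key ν μ _ _))
    exact fun u hu => hu
  · rw [Set.ofPred_and]; exact (measurableSet_le (by fun_prop) (by fun_prop)).inter (measurableSet_lt (by fun_prop) (by fun_prop))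
  · rw [Set.ofPred_and]; exact (measurableSet_le (by fun_prop) (by fun_prop)).inter (measurableSet_lt (by fun_prop) (by fun_prop))

lemma conv1 (a b c : ℝ≥0∞) : (2⁻¹ * a + 2⁻¹ * b) - c ≤ 2⁻¹ * (a - c) + 2⁻¹ * (b - c) := by
  rw [tsub_le_iff_right]
  calc 2⁻¹ * a + 2⁻¹ * b ≤ 2⁻¹ * (a - c + c) + 2⁻¹ * (b - c + c) := by
        gcongr <;> exact le_tsub_add
    _ = 2⁻¹ * (a - c) + 2⁻¹ * (b - c) + (2⁻¹ * c + 2⁻¹ * c) := by ring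
    _ = _ := by rw [← add_mul, ENNReal.inv_two_add_inv_two, one_mul]

lemma conv2 (a b c : ℝ≥0∞) : c - (2⁻¹ * a + 2⁻¹ * b) ≤ 2⁻¹ * (c - a) + 2⁻¹ * (c - b) := by
  rw [tsub_le_iff_right]
  calc c = 2⁻¹ * c + 2⁻¹ * c := by rw [← add_mul, ENNReal.inv_two_add_inv_two, one_mul]
    _ ≤ 2⁻¹ * (c - a + a) + 2⁻¹ * (c - b + b) := by
        gcongr <;> exact le_tsub_add
    _ = _ := by ring

lemma sconv1 {a b c : ℝ} (ha : 0 ≤ a) (h1 : a < c) (h2 : c < b) :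
    (2⁻¹ * ENNReal.ofReal a + 2⁻¹ * ENNReal.ofReal b) - ENNReal.ofReal c <
      2⁻¹ * (ENNReal.ofReal a - ENNReal.ofReal c) + 2⁻¹ * (ENNReal.ofReal b - ENNReal.ofReal c) := by
  have e : (2⁻¹ : ℝ≥0∞) = ENNReal.ofReal 2⁻¹ := by
    rw [ENNReal.ofReal_inv_of_pos (by norm_num)]; simp
  rw [← ENNReal.ofReal_sub _ (by linarith), ← ENNReal.ofReal_sub _ (by linarith),
    ENNReal.ofReal_of_nonpos (show a - c ≤ 0 by linarith), e,
    ← ENNReal.ofReal_mul (by norm_num), ← ENNReal.ofReal_mul (by norm_num),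
    ← ENNReal.ofReal_mul (by norm_num), ← ENNReal.ofReal_add (by linarith) (by linarith),
    ← ENNReal.ofReal_sub _ (by linarith), mul_zero, zero_add,
    ENNReal.ofReal_lt_ofReal_iff (by linarith)]
  linarith

lemma sconv2 {a b c : ℝ} (ha : 0 ≤ a) (h1 : a < c) (h2 : c < b) :
    ENNReal.ofReal c - (2⁻¹ * ENNReal.ofReal a + 2⁻¹ * ENNReal.ofReal b) <
      2⁻¹ * (ENNReal.ofReal c - ENNReal.ofReal a) + 2⁻¹ * (ENNReal.ofReal c - ENNReal.ofReal b) := by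
  have e : (2⁻¹ : ℝ≥0∞) = ENNReal.ofReal 2⁻¹ := by
    rw [ENNReal.ofReal_inv_of_pos (by norm_num)]; simp
  rw [← ENNReal.ofReal_sub _ (by linarith), ← ENNReal.ofReal_sub _ (by linarith),
    ENNReal.ofReal_of_nonpos (show c - b ≤ 0 by linarith), e,
    ← ENNReal.ofReal_mul (by norm_num), ← ENNReal.ofReal_mul (by norm_num),
    ← ENNReal.ofReal_mul (by norm_num), ← ENNReal.ofReal_add (by linarith) (by linarith),
    ← ENNReal.ofReal_sub _ (by linarith), mul_zero, add_zero,
    ENNReal.ofReal_lt_ofReal_iff (by linarith)]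
  linarith

lemma wd_convex {μ₁ μ₂ ν σ : Measure ℝ}
    (hσ : ∀ s, σ (Iic s) = 2⁻¹ * μ₁ (Iic s) + 2⁻¹ * μ₂ (Iic s)) (p : ℝ × ℝ) :
    wd σ ν p ≤ 2⁻¹ * wd μ₁ ν p + 2⁻¹ * wd μ₂ ν p := by
  unfold wd
  rw [hσ, hσ]
  refine (add_le_add (conv1 _ _ _) (conv2 _ _ _)).trans (le_of_eq ?_)
  ring

lemma cont_cdf (ν : Measure ℝ) [IsProbabilityMeasure ν] [NullSingletonClass ν] : Continuous (cdf ν) := by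
  rw [continuous_iff_continuousAt]
  intro x
  rw [(monotone_cdf ν).continuousAt_iff_leftLim_eq_rightLim, (cdf ν).rightLim_eq]
  refine le_antisymm ((monotone_cdf ν).leftLim_le le_rfl) ?_
  have h := (cdf ν).measure_singleton x
  rw [measure_cdf, measure_singleton] at h
  have := ENNReal.ofReal_eq_zero.1 h.symm
  linarith

lemma strict_aux {μ₁ μ₂ ν σ : Measure ℝ} [IsProbabilityMeasure μ₁] [IsProbabilityMeasure μ₂]
    [IsProbabilityMeasure ν] [NullSingletonClass ν]
    (hσ : ∀ s, σ (Iic s) = 2⁻¹ * μ₁ (Iic s) + 2⁻¹ * μ₂ (Iic s))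
    (hae : ∀ᵐ p : ℝ × ℝ, wd σ ν p = 2⁻¹ * wd μ₁ ν p + 2⁻¹ * wd μ₂ ν p) (s₀ : ℝ) :
    cdf μ₂ s₀ ≤ cdf μ₁ s₀ := by
  by_contra hcon
  rw [not_le] at hcon
  have hiv : ∀ u, cdf μ₁ s₀ < u → u < cdf μ₂ s₀ → ∃ t, cdf ν t = u := by
    intro u h1 h2
    have h1' : 0 < u := (cdf_nonneg _ _).trans_lt h1
    have h2' : u < 1 := h2.trans_le (cdf_le_one _ _)
    obtain ⟨x, hx⟩ := ((tendsto_cdf_atBot ν).eventually (gt_mem_nhds h1')).exists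
    obtain ⟨y, hy⟩ := ((tendsto_cdf_atTop ν).eventually (lt_mem_nhds h2')).exists
    exact mem_range_of_exists_le_of_exists_ge (cont_cdf ν) ⟨x, hx.le⟩ ⟨y, hy.le⟩
  obtain ⟨t₀, h1, h2, hne⟩ : ∃ t, cdf μ₁ s₀ < cdf ν t ∧ cdf ν t < cdf μ₂ s₀ ∧ t ≠ s₀ := by
    obtain ⟨u, hu1, hu2⟩ := exists_between hcon
    obtain ⟨v, hv1, hv2⟩ := exists_between hu2
    obtain ⟨t, ht⟩ := hiv u hu1 hu2
    obtain ⟨t', ht'⟩ := hiv v (hu1.trans hv1) hv2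
    by_cases h : t = s₀
    · refine ⟨t', by rw [ht']; linarith, by rw [ht']; linarith, ?_⟩
      rintro rfl
      rw [h] at ht
      linarith
    · exact ⟨t, by rw [ht]; linarith, by rw [ht]; linarith, h⟩
  have hr : ∀ (α : Measure ℝ) (x : ℝ), Tendsto (cdf α) (𝓝[>] x) (𝓝 (cdf α x)) := fun α x =>
      ((cdf α).right_continuous x).mono_left (nhdsWithin_mono _ Ioi_subset_Ici_self)
  obtain ⟨a, ha, hsa⟩ := (mem_nhdsGT_iff_exists_Ioo_subset).1
    ((hr μ₁ s₀).eventually (gt_mem_nhds h1))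
  obtain ⟨b, hb, htb⟩ := (mem_nhdsGT_iff_exists_Ioo_subset).1
    ((hr ν t₀).eventually (gt_mem_nhds h2))
  rw [mem_Ioi] at ha hb
  obtain ⟨a', ha', haa, b', hb', hbb, hord⟩ : ∃ a', s₀ < a' ∧ a' ≤ a ∧ ∃ b', t₀ < b' ∧ b' ≤ b ∧
      ((a' ≤ t₀) ∨ (b' ≤ s₀)) := by
    rcases lt_or_gt_of_ne hne with h | h
    · exact ⟨a, ha, le_rfl, min b s₀, lt_min hb h, min_le_left _ _, Or.inr (min_le_right _ _)⟩
    · exact ⟨min a t₀, lt_min ha h, min_le_left _ _, b, hb, le_rfl, Or.inl (min_le_right _ _)⟩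
  have hpos : (volume : Measure (ℝ × ℝ)) (Ioo s₀ a' ×ˢ Ioo t₀ b') ≠ 0 := by
    rw [Measure.volume_eq_prod, Measure.prod_prod, Real.volume_Ioo, Real.volume_Ioo]
    simp [ha', hb']
  obtain ⟨⟨s, t⟩, hp⟩ : ∃ p : ℝ × ℝ, p ∈ Ioo s₀ a' ×ˢ Ioo t₀ b' ∧
      wd σ ν p = 2⁻¹ * wd μ₁ ν p + 2⁻¹ * wd μ₂ ν p := by
    by_contra hno
    push Not at hno
    exact hpos (measure_mono_null (fun p hp => hno p hp) hae)
  obtain ⟨⟨⟨hs1, hs2⟩, ⟨ht1, ht2⟩⟩, heq⟩ := hp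
  simp only at hs1 hs2 ht1 ht2
  have k1 : cdf μ₁ s < cdf ν t := by
    have : cdf μ₁ s < cdf ν t₀ := hsa ⟨hs1, hs2.trans_le haa⟩
    exact this.trans_le (monotone_cdf ν ht1.le)
  have k2 : cdf ν t < cdf μ₂ s := by
    have : cdf ν t < cdf μ₂ s₀ := htb ⟨ht1, ht2.trans_le hbb⟩
    exact this.trans_le (monotone_cdf μ₂ hs1.le)
  refine absurd heq (ne_of_lt ?_)
  unfold wd
  rw [hσ, hσ]
  rcases hord with h | h
  · have hst : s ≤ t := by linarith
    have hlt := sconv1 (cdf_nonneg μ₁ s) k1 k2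
    simp only [ofReal_cdf] at hlt
    simp only [min_eq_left hst, max_eq_right hst]
    refine (ENNReal.add_lt_add_of_lt_of_le ?_ hlt (conv2 _ _ _)).trans_le (le_of_eq (by ring))
    exact ne_top_of_le_ne_top (measure_ne_top ν _) tsub_le_self
  · have hst : t ≤ s := by linarith
    have hlt := sconv2 (cdf_nonneg μ₁ s) k1 k2
    simp only [ofReal_cdf] at hlt
    simp only [min_eq_right hst, max_eq_left hst]
    refine (ENNReal.add_lt_add_of_le_of_lt ?_ (conv1 _ _ _) hlt).trans_le (le_of_eq (by ring))
    refine ne_top_of_le_ne_top (b := 2⁻¹ * μ₁ (Iic t) + 2⁻¹ * μ₂ (Iic t)) ?_ tsub_le_self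
    finiteness

lemma strict1D {μ₁ μ₂ ν σ : Measure ℝ} [IsProbabilityMeasure μ₁] [IsProbabilityMeasure μ₂]
    [IsProbabilityMeasure ν] [NullSingletonClass ν]
    (hσ : ∀ s, σ (Iic s) = 2⁻¹ * μ₁ (Iic s) + 2⁻¹ * μ₂ (Iic s))
    (hae : ∀ᵐ p : ℝ × ℝ, wd σ ν p = 2⁻¹ * wd μ₁ ν p + 2⁻¹ * wd μ₂ ν p) : μ₁ = μ₂ := by
  refine Measure.eq_of_cdf _ _ ?_
  ext s
  refine le_antisymm (strict_aux (σ := σ) (ν := ν) (fun s => by rw [hσ, add_comm]) ?_ s)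
    (strict_aux hσ hae s)
  filter_upwards [hae] with p hp
  rw [hp, add_comm]

lemma wd_bound {μ ν : Measure ℝ} [IsProbabilityMeasure μ] [IsProbabilityMeasure ν] {R : ℝ}
    (hμ : μ (Icc (-R) R)ᶜ = 0) (hν : ν (Icc (-R) R)ᶜ = 0) (p : ℝ × ℝ) :
    wd μ ν p ≤ (Icc (-R) R ×ˢ Icc (-R) R).indicator (fun _ => 2) p := by
  unfold wd
  by_cases hp : p ∈ Icc (-R) R ×ˢ Icc (-R) R
  · rw [indicator_of_mem hp, ← one_add_one_eq_two]
    exact add_le_add (tsub_le_self.trans prob_le_one) (tsub_le_self.trans prob_le_one)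
  · rw [indicator_of_notMem hp]
    have hcase : min p.1 p.2 < -R ∨ R < max p.1 p.2 := by
      by_contra h
      push Not at h
      rw [le_min_iff, max_le_iff] at h
      exact hp ⟨⟨h.1.1, h.2.1⟩, ⟨h.1.2, h.2.2⟩⟩
    have h0 : ∀ α : Measure ℝ, α (Icc (-R) R)ᶜ = 0 → min p.1 p.2 < -R → α (Iic (min p.1 p.2)) = 0 := by
      intro α hα h
      refine measure_mono_null (t := (Icc (-R) R)ᶜ) (fun x hx hx' => ?_) hα
      exact absurd (hx'.1.trans hx) (not_le.2 h)
    have h1 : ∀ α : Measure ℝ, [IsProbabilityMeasure α] → α (Icc (-R) R)ᶜ = 0 → R < max p.1 p.2 →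
        α (Iic (max p.1 p.2)) = 1 := by
      intro α _ hα h
      rw [← prob_compl_eq_zero_iff measurableSet_Iic]
      refine measure_mono_null (t := (Icc (-R) R)ᶜ) (fun x hx hx' => ?_) hα
      exact hx (hx'.2.trans h.le)
    rcases hcase with h | h
    · simp [h0 μ hμ h, h0 ν hν h]
    · rw [h1 μ hμ h, h1 ν hν h, tsub_eq_zero_of_le prob_le_one, tsub_eq_zero_of_le prob_le_one]
      simp

lemma lint_bound (R : ℝ) : ∫⁻ p : ℝ × ℝ, (Icc (-R) R ×ˢ Icc (-R) R).indicator (fun _ => (2:ℝ≥0∞)) p ≠ ∞ := by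
  rw [lintegral_indicator_const (measurableSet_Icc.prod measurableSet_Icc), Measure.volume_eq_prod,
    Measure.prod_prod, Real.volume_Icc]
  finiteness

lemma wd_tendsto {ι : Type*} {L : Filter ι} {μs : ι → ProbabilityMeasure ℝ}
    {μ : ProbabilityMeasure ℝ} (ν : Measure ℝ) [IsProbabilityMeasure ν]
    (h : Tendsto μs L (𝓝 μ)) :
    ∀ᵐ p : ℝ × ℝ, Tendsto (fun i => wd (μs i : Measure ℝ) ν p) L (𝓝 (wd (μ : Measure ℝ) ν p)) := by
  have hC : {t : ℝ | 0 < (μ : Measure ℝ) {a | a = t}}.Countable :=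
    Measure.countable_meas_level_set_pos measurable_id
  have hae : ∀ᵐ t : ℝ, (μ : Measure ℝ) {t} = 0 := by
    filter_upwards [hC.ae_notMem volume] with t ht
    simpa using ht
  have hp1 : ∀ᵐ p : ℝ × ℝ, (μ : Measure ℝ) {p.1} = 0 := by
    rw [Measure.volume_eq_prod]
    exact Measure.quasiMeasurePreserving_fst.ae hae
  have hp2 : ∀ᵐ p : ℝ × ℝ, (μ : Measure ℝ) {p.2} = 0 := by
    rw [Measure.volume_eq_prod]
    exact Measure.quasiMeasurePreserving_snd.ae hae
  have hT : ∀ t, (μ : Measure ℝ) {t} = 0 →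
      Tendsto (fun i => (μs i : Measure ℝ) (Iic t)) L (𝓝 ((μ : Measure ℝ) (Iic t))) := by
    intro t ht
    apply ProbabilityMeasure.tendsto_measure_of_null_frontier_of_tendsto' h
    rwa [frontier_Iic]
  filter_upwards [hp1, hp2] with p h1 h2
  unfold wd
  have hmin : (μ : Measure ℝ) {min p.1 p.2} = 0 := by
    rcases min_choice p.1 p.2 with h | h <;> rw [h] <;> assumption
  have hmax : (μ : Measure ℝ) {max p.1 p.2} = 0 := by
    rcases max_choice p.1 p.2 with h | h <;> rw [h] <;> assumption
  exact (ENNReal.Tendsto.sub (hT _ hmin) tendsto_const_nhds (Or.inl (measure_ne_top _ _))).add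
    (ENNReal.Tendsto.sub tendsto_const_nhds (hT _ hmax) (Or.inl (measure_ne_top _ _)))

lemma wd_meas0 (μ ν : Measure ℝ) : Measurable (wd μ ν) := by
  have h : ∀ α : Measure ℝ, Measurable (fun s => α (Iic s)) := fun α =>
    Monotone.measurable fun a b hab => measure_mono (Iic_subset_Iic.2 hab)
  have a1 : Measurable (fun q : ℝ × ℝ => min q.1 q.2) := by fun_prop
  have a2 : Measurable (fun q : ℝ × ℝ => max q.1 q.2) := by fun_prop
  exact (((h μ).comp a1).sub ((h ν).comp a2)).add (((h ν).comp a1).sub ((h μ).comp a2))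

lemma proj_cont {d : ℕ} (θ : Ed d) : Continuous (proj θ) := by
  unfold proj; fun_prop

instance proj_prob {d : ℕ} (μ : Measure (Ed d)) [IsProbabilityMeasure μ] (θ : Ed d) :
    IsProbabilityMeasure (μ.map (proj θ)) :=
  Measure.isProbabilityMeasure_map (proj_cont θ).measurable.aemeasurable

lemma cdf_joint_meas {d : ℕ} (μ : Measure (Ed d)) [IsProbabilityMeasure μ] :
    Measurable (fun q : sphere (0 : Ed d) 1 × ℝ => (μ.map (proj (q.1 : Ed d))) (Iic q.2)) := by
  have hm : MeasurableSet {z : (sphere (0 : Ed d) 1 × ℝ) × Ed d | ⟪z.2, (z.1.1 : Ed d)⟫ ≤ z.1.2} :=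
    measurableSet_le (by fun_prop) (by fun_prop)
  convert! measurable_measure_prodMk_left (ν := μ) hm using 2 with q
  rw [Measure.map_apply (proj_cont _).measurable measurableSet_Iic]
  rfl

lemma wd_joint_meas {d : ℕ} (μ ν : Measure (Ed d)) [IsProbabilityMeasure μ] [IsProbabilityMeasure ν] :
    Measurable (fun q : sphere (0 : Ed d) 1 × (ℝ × ℝ) =>
      wd (μ.map (proj (q.1 : Ed d))) (ν.map (proj (q.1 : Ed d))) q.2) := by
  unfold wd
  have a1 : Measurable (fun q : sphere (0 : Ed d) 1 × (ℝ × ℝ) => (q.1, min q.2.1 q.2.2)) := by fun_prop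
  have a2 : Measurable (fun q : sphere (0 : Ed d) 1 × (ℝ × ℝ) => (q.1, max q.2.1 q.2.2)) := by fun_prop
  exact (((cdf_joint_meas μ).comp a1).sub ((cdf_joint_meas ν).comp a2)).add
    (((cdf_joint_meas ν).comp a1).sub ((cdf_joint_meas μ).comp a2))

def ww {d : ℕ} (μ ν : Measure (Ed d)) (θ : sphere (0 : Ed d) 1) : ℝ≥0∞ :=
  ∫⁻ p, wd (μ.map (proj (θ : Ed d))) (ν.map (proj (θ : Ed d))) p

lemma ww_meas {d : ℕ} (μ ν : Measure (Ed d)) [IsProbabilityMeasure μ] [IsProbabilityMeasure ν] :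
    Measurable (ww μ ν) := (wd_joint_meas μ ν).lintegral_prod_right'

lemma SW_eq_s1 {d : ℕ} (μ ν : Measure (Ed d)) [IsProbabilityMeasure μ] [IsProbabilityMeasure ν] :
    SW2sq μ ν = ∫⁻ θ, ww μ ν θ ∂(unifSphere d) := by
  unfold SW2sq ww
  simp_rw [W2sq_eq]

instance unif_fin (d : ℕ) : IsFiniteMeasure (unifSphere d) := by
  constructor
  rw [unifSphere, Measure.smul_apply, smul_eq_mul]
  exact (ENNReal.inv_mul_le_one _).trans_lt ENNReal.one_lt_top

lemma proj_supp {d : ℕ} {K : Set (Ed d)} {R : ℝ} (hR : K ⊆ closedBall 0 R) {μ : Measure (Ed d)}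
    (hμ : μ Kᶜ = 0) (θ : sphere (0 : Ed d) 1) : μ.map (proj (θ : Ed d)) (Icc (-R) R)ᶜ = 0 := by
  rw [Measure.map_apply (proj_cont _).measurable measurableSet_Icc.compl]
  refine measure_mono_null (t := Kᶜ) (fun x hx hxK => hx ?_) hμ
  have h1 : ‖x‖ ≤ R := by simpa using hR hxK
  have h2 : ‖(θ : Ed d)‖ = 1 := by simp
  have h3 := abs_real_inner_le_norm x (θ : Ed d)
  rw [h2, mul_one] at h3
  exact abs_le.1 (h3.trans h1)

lemma ww_bound {d : ℕ} {K : Set (Ed d)} {R : ℝ} (hR : K ⊆ closedBall 0 R) {μ ν : Measure (Ed d)}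
    [IsProbabilityMeasure μ] [IsProbabilityMeasure ν]
    (hμ : μ Kᶜ = 0) (hν : ν Kᶜ = 0) (θ : sphere (0 : Ed d) 1) :
    ww μ ν θ ≤ ∫⁻ p : ℝ × ℝ, (Icc (-R) R ×ˢ Icc (-R) R).indicator (fun _ => (2:ℝ≥0∞)) p :=
  lintegral_mono fun p => wd_bound (proj_supp hR hμ θ) (proj_supp hR hν θ) p

lemma SW_ne_top {d : ℕ} {K : Set (Ed d)} (hK : IsCompact K) {μ ν : Measure (Ed d)}
    [IsProbabilityMeasure μ] [IsProbabilityMeasure ν]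
    (hμ : μ Kᶜ = 0) (hν : ν Kᶜ = 0) : SW2sq μ ν ≠ ∞ := by
  obtain ⟨R, hR⟩ := hK.isBounded.subset_closedBall 0
  rw [SW_eq_s1]
  refine ne_top_of_le_ne_top ?_ (lintegral_mono fun θ => ww_bound hR hμ hν θ)
  rw [lintegral_const]
  exact ENNReal.mul_ne_top (lint_bound R) (measure_ne_top _ _)

lemma SW_cont {d : ℕ} {K : Set (Ed d)} (hK : IsCompact K) (ν : ProbabilityMeasure (Ed d))
    (hν : (ν : Measure (Ed d)) Kᶜ = 0) :
    ContinuousOn (fun μ : ProbabilityMeasure (Ed d) => SW2sq (μ : Measure (Ed d)) (ν : Measure (Ed d)))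
      {μ : ProbabilityMeasure (Ed d) | (μ : Measure (Ed d)) Kᶜ = 0} := by
  obtain ⟨R, hR⟩ := hK.isBounded.subset_closedBall 0
  intro μ hμ
  unfold ContinuousWithinAt
  simp_rw [SW_eq_s1]
  refine tendsto_lintegral_filter_of_dominated_convergence
    (fun _ => ∫⁻ p : ℝ × ℝ, (Icc (-R) R ×ˢ Icc (-R) R).indicator (fun _ => (2:ℝ≥0∞)) p)
    (Eventually.of_forall fun α => ww_meas _ _) ?_ ?_ ?_
  · filter_upwards [self_mem_nhdsWithin] with α hα
    exact Eventually.of_forall fun θ => ww_bound hR hα hν θ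
  · rw [lintegral_const]
    exact ENNReal.mul_ne_top (lint_bound R) (measure_ne_top _ _)
  · refine Eventually.of_forall fun θ => ?_
    unfold ww
    refine tendsto_lintegral_filter_of_dominated_convergence
      ((Icc (-R) R ×ˢ Icc (-R) R).indicator (fun _ => (2:ℝ≥0∞)))
      (Eventually.of_forall fun α => wd_meas0 _ _) ?_ (lint_bound R) ?_
    · filter_upwards [self_mem_nhdsWithin] with α hα
      have i1 : IsProbabilityMeasure ((α : Measure (Ed d)).map (proj (θ : Ed d))) := proj_prob _ _
      have i2 : IsProbabilityMeasure ((ν : Measure (Ed d)).map (proj (θ : Ed d))) := proj_prob _ _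
      have hb := wd_bound (proj_supp hR hα θ) (proj_supp hR hν θ)
      exact Eventually.of_forall hb
    · have hid : Tendsto (fun α : ProbabilityMeasure (Ed d) => α)
        (𝓝[{μ : ProbabilityMeasure (Ed d) | (μ : Measure (Ed d)) Kᶜ = 0}] μ) (𝓝 μ) :=
        tendsto_id.mono_left nhdsWithin_le_nhds
      have ht := ProbabilityMeasure.tendsto_map_of_tendsto_of_continuous _ _ hid
        (proj_cont (θ : Ed d))
      have hw := wd_tendsto ((ν : Measure (Ed d)).map (proj (θ : Ed d))) ht
      simp only [ProbabilityMeasure.toMeasure_map] at hw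
      exact hw

lemma proj_noAtoms {d : ℕ} {ν : Measure (Ed d)} (hac : ν ≪ volume) (θ : sphere (0 : Ed d) 1) :
    NullSingletonClass (ν.map (proj (θ : Ed d))) := by
  constructor
  intro c
  rw [Measure.map_apply (proj_cont _).measurable (measurableSet_singleton c)]
  apply hac
  have hne : (θ : Ed d) ≠ 0 := by
    intro h
    have h2 : ‖(θ : Ed d)‖ = 1 := by simp
    rw [h, norm_zero] at h2
    norm_num at h2
  let S : AffineSubspace ℝ (Ed d) :=
    (AffineSubspace.mk' c ⊥).comap ((innerₛₗ ℝ (θ : Ed d)).toAffineMap)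
  have hmem : ∀ x, x ∈ S ↔ proj (θ : Ed d) x = c := by
    intro x
    simp only [S, AffineSubspace.mem_comap, AffineSubspace.mem_mk', proj]
    simp [real_inner_comm, sub_eq_zero]
  have hS : (proj (θ : Ed d)) ⁻¹' {c} = (S : Set (Ed d)) := by
    ext x
    exact (hmem x).symm
  rw [hS]
  apply Measure.addHaar_affineSubspace
  intro htop
  have e1 : proj (θ : Ed d) 0 = c := (hmem 0).1 (by rw [htop]; trivial)
  have e2 : proj (θ : Ed d) θ = c := (hmem θ).1 (by rw [htop]; trivial)
  rw [← e1] at e2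
  simp [proj] at e2

lemma eq_of_ae_proj {d : ℕ} (μ ν : Measure (Ed d)) [IsProbabilityMeasure μ] [IsProbabilityMeasure ν]
    (h : ∀ᵐ θ : sphere (0 : Ed d) 1 ∂(unifSphere d),
      μ.map (proj (θ : Ed d)) = ν.map (proj (θ : Ed d))) : μ = ν := by
  have h' : ∀ᵐ θ : sphere (0 : Ed d) 1 ∂((volume : Measure (Ed d)).toSphere),
      μ.map (proj (θ : Ed d)) = ν.map (proj (θ : Ed d)) := by
    rw [unifSphere] at h
    rwa [Measure.ae_ennreal_smul_measure_eq (ENNReal.inv_ne_zero.2 (measure_ne_top _ _))] at h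
  have hch : ∀ (α : Measure (Ed d)) (θ : Ed d) (r : ℝ),
      charFun (α.map (proj θ)) r = charFun α (r • θ) := by
    intro α θ r
    rw [charFun_apply, charFun_apply, integral_map (proj_cont _).measurable.aemeasurable
      (by fun_prop)]
    congr 1
    ext x
    simp [proj, inner_smul_right]
  have hd : Dense {θ : sphere (0 : Ed d) 1 | μ.map (proj (θ : Ed d)) = ν.map (proj (θ : Ed d))} :=
    Measure.dense_of_ae h'
  have hall : ∀ (r : ℝ) (θ : sphere (0 : Ed d) 1),
      charFun μ (r • (θ : Ed d)) = charFun ν (r • (θ : Ed d)) := by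
    intro r
    have c1 : Continuous (fun θ : sphere (0 : Ed d) 1 => charFun μ (r • (θ : Ed d))) :=
      continuous_charFun.comp (by fun_prop)
    have c2 : Continuous (fun θ : sphere (0 : Ed d) 1 => charFun ν (r • (θ : Ed d))) :=
      continuous_charFun.comp (by fun_prop)
    have := Continuous.ext_on hd c1 c2 (fun θ hθ => by
      have hθ' : μ.map (proj (θ : Ed d)) = ν.map (proj (θ : Ed d)) := hθ
      show charFun μ (r • (θ : Ed d)) = charFun ν (r • (θ : Ed d))
      rw [← hch, ← hch, hθ'])
    exact fun θ => congrFun this θ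
  refine Measure.ext_of_charFun (funext fun t => ?_)
  by_cases ht : t = 0
  · simp [ht]
  · have hn : ‖t‖ ≠ 0 := norm_ne_zero_iff.2 ht
    have := hall ‖t‖ ⟨‖t‖⁻¹ • t, by simp [norm_smul, hn]⟩
    simpa [smul_smul, hn] using this

lemma wd_meas1 {d : ℕ} (α ν : Measure (Ed d)) [IsProbabilityMeasure α] [IsProbabilityMeasure ν]
    (θ : sphere (0 : Ed d) 1) :
    Measurable (wd (α.map (proj (θ : Ed d))) (ν.map (proj (θ : Ed d)))) := wd_meas0 _ _

lemma ww_half {d : ℕ} (μ₁ μ₂ ν : Measure (Ed d)) [IsProbabilityMeasure μ₁] [IsProbabilityMeasure μ₂]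
    [IsProbabilityMeasure ν] (θ : sphere (0 : Ed d) 1) :
    2⁻¹ * ww μ₁ ν θ + 2⁻¹ * ww μ₂ ν θ = ∫⁻ p,
      (2⁻¹ * wd (μ₁.map (proj (θ : Ed d))) (ν.map (proj (θ : Ed d))) p +
      2⁻¹ * wd (μ₂.map (proj (θ : Ed d))) (ν.map (proj (θ : Ed d))) p) := by
  rw [lintegral_add_left ((wd_meas1 μ₁ ν θ).const_mul _), lintegral_const_mul _ (wd_meas1 μ₁ ν θ),
      lintegral_const_mul _ (wd_meas1 μ₂ ν θ)]
  rfl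

lemma ww_conv {d : ℕ} {μ₁ μ₂ σ ν : Measure (Ed d)} [IsProbabilityMeasure μ₁] [IsProbabilityMeasure μ₂]
    [IsProbabilityMeasure ν] (θ : sphere (0 : Ed d) 1)
    (hσ' : ∀ (s : ℝ), σ.map (proj (θ : Ed d)) (Iic s) =
      2⁻¹ * μ₁.map (proj (θ : Ed d)) (Iic s) + 2⁻¹ * μ₂.map (proj (θ : Ed d)) (Iic s)) :
    ww σ ν θ ≤ 2⁻¹ * ww μ₁ ν θ + 2⁻¹ * ww μ₂ ν θ := by
  rw [ww_half]
  exact lintegral_mono fun p => wd_convex hσ' p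

lemma ww_strict {d : ℕ} {μ₁ μ₂ σ ν : Measure (Ed d)} [IsProbabilityMeasure μ₁] [IsProbabilityMeasure μ₂]
    [IsProbabilityMeasure ν] (hac : ν ≪ volume) (θ : sphere (0 : Ed d) 1)
    (hσ' : ∀ (s : ℝ), σ.map (proj (θ : Ed d)) (Iic s) =
      2⁻¹ * μ₁.map (proj (θ : Ed d)) (Iic s) + 2⁻¹ * μ₂.map (proj (θ : Ed d)) (Iic s))
    (hfin : ww σ ν θ ≠ ∞)
    (hθ : ww σ ν θ = 2⁻¹ * ww μ₁ ν θ + 2⁻¹ * ww μ₂ ν θ) :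
    μ₁.map (proj (θ : Ed d)) = μ₂.map (proj (θ : Ed d)) := by
  have := proj_noAtoms hac θ
  have hle : ∀ p, wd (σ.map (proj (θ : Ed d))) (ν.map (proj (θ : Ed d))) p ≤
      2⁻¹ * wd (μ₁.map (proj (θ : Ed d))) (ν.map (proj (θ : Ed d))) p +
      2⁻¹ * wd (μ₂.map (proj (θ : Ed d))) (ν.map (proj (θ : Ed d))) p := wd_convex hσ'
  rw [ww_half] at hθ
  have hmeas := (((wd_meas1 μ₁ ν θ).const_mul 2⁻¹).add ((wd_meas1 μ₂ ν θ).const_mul 2⁻¹))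
  exact strict1D hσ' (ν := ν.map (proj (θ : Ed d)))
    (ae_eq_of_ae_le_of_lintegral_le (Eventually.of_forall hle) hfin hmeas.aemeasurable hθ.ge)

lemma SW_strict {d : ℕ} {K : Set (Ed d)} (hK : IsCompact K) {μ₁ μ₂ σ ν : Measure (Ed d)}
    [IsProbabilityMeasure μ₁] [IsProbabilityMeasure μ₂] [IsProbabilityMeasure σ]
    [IsProbabilityMeasure ν] (h3 : σ Kᶜ = 0) (h4 : ν Kᶜ = 0)
    (hac : ν ≪ volume) (hσ : ∀ s, σ s = 2⁻¹ * μ₁ s + 2⁻¹ * μ₂ s)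
    (hle : 2⁻¹ * SW2sq μ₁ ν + 2⁻¹ * SW2sq μ₂ ν ≤ SW2sq σ ν) : μ₁ = μ₂ := by
  obtain ⟨R, hR⟩ := hK.isBounded.subset_closedBall 0
  have hst := SW_ne_top hK h3 h4
  rw [SW_eq_s1] at hst
  rw [SW_eq_s1, SW_eq_s1, SW_eq_s1, ← lintegral_const_mul _ (ww_meas _ _),
    ← lintegral_const_mul _ (ww_meas _ _), ← lintegral_add_left ((ww_meas _ _).const_mul _)] at hle
  have hσ' : ∀ (θ : Ed d) (s : ℝ), σ.map (proj θ) (Iic s) =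
      2⁻¹ * μ₁.map (proj θ) (Iic s) + 2⁻¹ * μ₂.map (proj θ) (Iic s) := by
    intro θ s
    simp only [Measure.map_apply (proj_cont θ).measurable measurableSet_Iic, hσ]
  have hle' : ∀ θ, ww σ ν θ ≤ 2⁻¹ * ww μ₁ ν θ + 2⁻¹ * ww μ₂ ν θ := fun θ => ww_conv θ (hσ' θ)
  have hmeas := (((ww_meas μ₁ ν).const_mul 2⁻¹).add ((ww_meas μ₂ ν).const_mul 2⁻¹))
  have hae := ae_eq_of_ae_le_of_lintegral_le (μ := unifSphere d)
    (Eventually.of_forall hle') hst hmeas.aemeasurable hle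
  apply eq_of_ae_proj
  filter_upwards [hae] with θ hθ
  exact ww_strict hac θ (hσ' θ) (ne_top_of_le_ne_top (lint_bound R) (ww_bound hR h3 h4 θ)) hθ

lemma memP2_iff {d : ℕ} {K : Set (Ed d)} (hK : IsCompact K) (μ : ProbabilityMeasure (Ed d)) :
    MemP2 K μ.toMeasure ↔ (μ : Measure (Ed d)) Kᶜ = 0 := by
  refine ⟨fun h => h.2.1, fun h => ⟨inferInstance, h, ?_⟩⟩
  obtain ⟨R, hR⟩ := hK.isBounded.subset_closedBall 0
  have hae : ∀ᵐ x ∂(μ : Measure (Ed d)), (‖x‖₊ : ℝ≥0∞) ^ 2 ≤ ENNReal.ofReal R ^ 2 := by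
    have : ∀ᵐ x ∂(μ : Measure (Ed d)), x ∈ K := h
    filter_upwards [this] with x hx
    have h1 : ‖x‖ ≤ R := by simpa using hR hx
    gcongr
    rw [← enorm_eq_nnnorm, ← ofReal_norm]
    exact ENNReal.ofReal_le_ofReal h1
  refine (lintegral_mono_ae hae).trans_lt ?_
  simp

lemma compact_P {d : ℕ} {K : Set (Ed d)} (hK : IsCompact K) :
    IsCompact {μ : ProbabilityMeasure (Ed d) | (μ : Measure (Ed d)) Kᶜ = 0} := by
  have := isCompact_setOfPred_probabilityMeasure_mass_eq_compl_isCompact_le (u := fun _ => 0)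
    (K := fun _ => K) tendsto_const_nhds (fun _ => hK) (Or.inr monotone_const)
  convert this using 2
  ext μ
  simp

end helpers

/-- For K compact, F lower semicontinuous and convex, τ > 0 and μ_k ∈ P_2(K)
absolutely continuous w.r.t. the Lebesgue measure, the SW-JKO step has a unique minimizer. -/
theorem swjko_step_unique_minimizer_of_convex (d : ℕ) (K : Set (Ed d)) (hK : IsCompact K)
    (F : ProbabilityMeasure (Ed d) → ℝ)
    (hFlsc : LowerSemicontinuousOn F {μ : ProbabilityMeasure (Ed d) | MemP2 K μ.toMeasure})
    (hFconv : ∀ (t : ℝ≥0), t ≤ 1 → ∀ μ ν σ : ProbabilityMeasure (Ed d),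
      σ.toMeasure = t • μ.toMeasure + (1 - t) • ν.toMeasure →
      F σ ≤ (t : ℝ) * F μ + (1 - (t : ℝ)) * F ν)
    (τ : ℝ) (hτ : 0 < τ)
    (μk : ProbabilityMeasure (Ed d)) (hμk : MemP2 K μk.toMeasure)
    (hac : μk.toMeasure ≪ (volume : Measure (Ed d))) :
    ∃! μ : ProbabilityMeasure (Ed d), MemP2 K μ.toMeasure ∧
      ∀ ν : ProbabilityMeasure (Ed d), MemP2 K ν.toMeasure →
        (SW2sq μ.toMeasure μk.toMeasure).toReal / (2 * τ) + F μ ≤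
          (SW2sq ν.toMeasure μk.toMeasure).toReal / (2 * τ) + F ν := by

  classical
  have hset : {μ : ProbabilityMeasure (Ed d) | MemP2 K μ.toMeasure} =
      {μ : ProbabilityMeasure (Ed d) | (μ : Measure (Ed d)) Kᶜ = 0} := by
    ext μ; exact memP2_iff hK μ
  have hfin : ∀ μ : ProbabilityMeasure (Ed d), MemP2 K μ.toMeasure →
      SW2sq μ.toMeasure μk.toMeasure ≠ ∞ := fun μ hμ => SW_ne_top hK hμ.2.1 hμk.2.1
  obtain ⟨μ, hμ, hmin⟩ : ∃ μ ∈ {μ : ProbabilityMeasure (Ed d) | MemP2 K μ.toMeasure},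
      IsMinOn (fun μ : ProbabilityMeasure (Ed d) =>
        (SW2sq μ.toMeasure μk.toMeasure).toReal / (2 * τ) + F μ)
        {μ : ProbabilityMeasure (Ed d) | MemP2 K μ.toMeasure} μ := by
    refine LowerSemicontinuousOn.exists_isMinOn ⟨μk, hμk⟩ (hset ▸ compact_P hK) ?_
    refine LowerSemicontinuousOn.add (ContinuousOn.lowerSemicontinuousOn ?_) hFlsc
    refine ContinuousOn.div_const ?_ _
    intro μ hμ
    have hc := SW_cont hK μk hμk.2.1
    rw [← hset] at hc
    exact (ENNReal.tendsto_toReal (hfin μ hμ)).comp (hc μ hμ)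
  refine ⟨μ, ⟨hμ, fun ν hν => hmin hν⟩, ?_⟩
  rintro ν ⟨hν, hνmin⟩
  have e1 := hνmin μ hμ
  have e2 : (SW2sq μ.toMeasure μk.toMeasure).toReal / (2 * τ) + F μ ≤
      (SW2sq ν.toMeasure μk.toMeasure).toReal / (2 * τ) + F ν := hmin hν
  have hhalf : (1 - 2⁻¹ : ℝ≥0) = 2⁻¹ := by
    apply tsub_eq_of_eq_add
    norm_num
  have hms : ∀ s, ((2⁻¹ : ℝ≥0) • μ.toMeasure + (1 - 2⁻¹ : ℝ≥0) • ν.toMeasure) s =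
      2⁻¹ * μ.toMeasure s + 2⁻¹ * ν.toMeasure s := by
    intro s
    rw [hhalf, Measure.add_apply, Measure.smul_apply, Measure.smul_apply, ENNReal.smul_def,
      ENNReal.smul_def]
    simp
  have hprob : IsProbabilityMeasure
      ((2⁻¹ : ℝ≥0) • μ.toMeasure + (1 - 2⁻¹ : ℝ≥0) • ν.toMeasure) := by
    constructor
    rw [hms]
    simp [ENNReal.inv_two_add_inv_two]
  let σ : ProbabilityMeasure (Ed d) :=
    ⟨(2⁻¹ : ℝ≥0) • μ.toMeasure + (1 - 2⁻¹ : ℝ≥0) • ν.toMeasure, hprob⟩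
  have hσs : ∀ s, σ.toMeasure s = 2⁻¹ * μ.toMeasure s + 2⁻¹ * ν.toMeasure s := hms
  have hσK : σ.toMeasure Kᶜ = 0 := by
    rw [hσs, hμ.2.1, hν.2.1]; simp
  have hσ : MemP2 K σ.toMeasure := (memP2_iff hK σ).2 hσK
  have hF := hFconv 2⁻¹ (by rw [← hhalf]; exact tsub_le_self) μ ν σ rfl
  have e3 := hνmin σ hσ
  have e4 : (SW2sq μ.toMeasure μk.toMeasure).toReal / (2 * τ) + F μ ≤
      (SW2sq σ.toMeasure μk.toMeasure).toReal / (2 * τ) + F σ := hmin hσ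
  have hreal : 2⁻¹ * (SW2sq μ.toMeasure μk.toMeasure).toReal +
      2⁻¹ * (SW2sq ν.toMeasure μk.toMeasure).toReal ≤
      (SW2sq σ.toMeasure μk.toMeasure).toReal := by
    push_cast at hF
    have h2τ : 0 < 2 * τ := by linarith
    rw [← div_le_div_iff_of_pos_right h2τ, add_div, mul_div_assoc, mul_div_assoc]
    linarith
  refine (SW_strict hK hσK hμk.2.1 hac hσs ?_ |> fun h => Subtype.ext h.symm)
  rw [← ENNReal.toReal_le_toReal ?_ (hfin σ hσ), ENNReal.toReal_add, ENNReal.toReal_mul,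
    ENNReal.toReal_mul]
  · simpa using hreal
  · exact ENNReal.mul_ne_top (by simp) (hfin μ hμ)
  · exact ENNReal.mul_ne_top (by simp) (hfin ν hν)
  · exact ENNReal.add_ne_top.2 ⟨ENNReal.mul_ne_top (by simp) (hfin μ hμ),
      ENNReal.mul_ne_top (by simp) (hfin ν hν)⟩
end
end

section
/- Let μ, ν ∈ P_2(ℝ^d) be supported on the same line, i.e. there exist a ∈ ℝ^d and a unit vector u ∈ S^{d−1} such that both μ and ν are supported in {a + tu : t ∈ ℝ}. Then SW_2²(μ, ν) = W_2²(μ, ν)/d. -/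
open MeasureTheory ENNReal Metric Filter
open scoped RealInnerProductSpace NNReal

noncomputable section

lemma W2sq_map_le {E F : Type*} [MeasurableSpace E] [NormedAddCommGroup E]
    [MeasurableSpace F] [NormedAddCommGroup F] [BorelSpace F] [SecondCountableTopology F]
    (m n : Measure E) (f : E → F) (hf : Measurable f) (K : ℝ≥0) (hK : K ≠ 0)
    (h : ∀ x y, ‖f x - f y‖₊ ≤ K * ‖x - y‖₊) :
    W2sq (m.map f) (n.map f) ≤ (K : ℝ≥0∞) ^ 2 * W2sq m n := by
  unfold W2sq
  have h0 : (K : ℝ≥0∞) ^ 2 ≠ 0 := by simpa using hK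
  have h1 : (K : ℝ≥0∞) ^ 2 ≠ ∞ := by finiteness
  rw [ENNReal.mul_iInf_of_ne h0 h1]
  refine le_iInf fun π => ?_
  rw [ENNReal.mul_iInf_of_ne h0 h1]
  refine le_iInf fun hπ => ?_
  have hg : Measurable (Prod.map f f) := hf.prodMap hf
  have hc : IsCoupling (π.map (Prod.map f f)) (m.map f) (n.map f) := by
    refine ⟨?_, ?_⟩
    · rw [Measure.map_map measurable_fst hg, ← hπ.1, Measure.map_map hf measurable_fst]
      rfl
    · rw [Measure.map_map measurable_snd hg, ← hπ.2, Measure.map_map hf measurable_snd]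
      rfl
  refine (iInf₂_le (π.map (Prod.map f f)) hc).trans ?_
  · rw [lintegral_map (by fun_prop) hg, ← lintegral_const_mul' _ _ h1]
    refine lintegral_mono fun p => ?_
    rw [← mul_pow]
    have := h p.1 p.2
    gcongr
    exact_mod_cast this

lemma W2sq_self {E : Type*} [MeasurableSpace E] [NormedAddCommGroup E] [BorelSpace E]
    [SecondCountableTopology E] (m : Measure E) : W2sq m m = 0 := by
  have hg : Measurable (fun x : E => (x, x)) := by fun_prop
  have hc : IsCoupling (m.map (fun x : E => (x, x))) m m := by
    refine ⟨?_, ?_⟩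
    · rw [Measure.map_map measurable_fst hg]
      exact Measure.map_id
    · rw [Measure.map_map measurable_snd hg]
      exact Measure.map_id
  refine le_antisymm ((iInf₂_le (m.map (fun x => (x, x))) hc).trans ?_) zero_le
  · rw [lintegral_map (by fun_prop) hg]
    simp

lemma W2sq_affine (m n : Measure ℝ) [IsProbabilityMeasure m] [IsProbabilityMeasure n] (b k : ℝ) :
    W2sq (m.map (fun s => b + s * k)) (n.map (fun s => b + s * k))
      = (‖k‖₊ : ℝ≥0∞) ^ 2 * W2sq m n := by
  by_cases hk : k = 0
  · subst hk
    simp [Measure.map_const, W2sq_self]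
  have hk' : ‖k‖₊ ≠ 0 := by simpa using hk
  have hf : Measurable (fun s : ℝ => b + s * k) := by fun_prop
  apply le_antisymm
  · apply W2sq_map_le _ _ _ hf _ hk'
    intro x y
    rw [← nnnorm_mul]
    apply le_of_eq
    congr 1
    ring
  · have hg : Measurable (fun s : ℝ => (s - b) * k⁻¹) := by fun_prop
    have := W2sq_map_le (m.map (fun s => b + s * k)) (n.map (fun s => b + s * k)) _ hg
      (‖k‖₊⁻¹) (inv_ne_zero hk') (by
        intro x y
        rw [← nnnorm_inv, ← nnnorm_mul]
        apply le_of_eq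
        congr 1
        ring)
    have hid : (fun s : ℝ => (s - b) * k⁻¹) ∘ (fun s : ℝ => b + s * k) = id := by
      funext s
      simp [hk]
    rw [Measure.map_map hg hf, Measure.map_map hg hf, hid, Measure.map_id, Measure.map_id] at this
    have h2 : (‖k‖₊ : ℝ≥0∞) ^ 2 * ((‖k‖₊⁻¹ : ℝ≥0) : ℝ≥0∞) ^ 2 = 1 := by
      rw [← mul_pow]
      have : ‖k‖₊ * ‖k‖₊⁻¹ = 1 := mul_inv_cancel₀ hk'
      rw [← ENNReal.coe_mul, this]
      simp
    calc _ ≤ _ := mul_le_mul_right this _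
      _ = _ := by rw [← mul_assoc, h2, one_mul]

open scoped Pointwise in
lemma toSphere_map {d : ℕ} (L : Ed d ≃ₗᵢ[ℝ] Ed d) (f : Ed d → ℝ≥0∞) (hf : Measurable f) :
    ∫⁻ θ : sphere (0 : Ed d) 1, f (L θ) ∂(volume : Measure (Ed d)).toSphere =
    ∫⁻ θ : sphere (0 : Ed d) 1, f θ ∂(volume : Measure (Ed d)).toSphere := by
  let T : sphere (0 : Ed d) 1 → sphere (0 : Ed d) 1 := fun θ => ⟨L θ, by simp⟩
  have hT : Measurable T := by
    apply Measurable.subtype_mk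
    exact L.continuous.measurable.comp measurable_subtype_coe
  have hmap : (volume : Measure (Ed d)).toSphere.map T = (volume : Measure (Ed d)).toSphere := by
    ext s hs
    rw [Measure.map_apply hT hs, Measure.toSphere_apply' _ hs, Measure.toSphere_apply' _ (hT hs)]
    congr 1
    have hmp : MeasurePreserving L.toMeasurableEquiv (volume : Measure (Ed d)) volume :=
      L.measurePreserving
    rw [← hmp.measure_preimage_equiv (Set.Ioo (0 : ℝ) 1 • (Subtype.val '' s))]
    congr 1
    ext x
    simp only [Set.mem_smul, Set.mem_preimage]
    constructor
    · rintro ⟨r, hr, _, ⟨y, hy, rfl⟩, rfl⟩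
      exact ⟨r, hr, _, ⟨T y, hy, rfl⟩, (L.map_smul r (y : Ed d)).symm⟩
    · rintro ⟨r, hr, _, ⟨y, hy, rfl⟩, h⟩
      refine ⟨r, hr, L.symm y, ⟨⟨L.symm y, by simp⟩, ?_, rfl⟩, ?_⟩
      · simpa [T] using hy
      · apply L.injective
        rw [L.map_smul, L.apply_symm_apply]
        exact h
  conv_rhs => rw [← hmap]
  exact (lintegral_map (hf.comp measurable_subtype_coe) hT).symm

lemma int_inner_sq (d : ℕ) (u : Ed d) (hu : ‖u‖ = 1) :
    ∫⁻ θ : sphere (0 : Ed d) 1, (‖(⟪u, (θ : Ed d)⟫ : ℝ)‖₊ : ℝ≥0∞) ^ 2 ∂(unifSphere d)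
      = (d : ℝ≥0∞)⁻¹ := by
  have : Nontrivial (Ed d) := ⟨u, 0, by rintro rfl; simp at hu⟩
  have hd : d ≠ 0 := by
    have := Module.finrank_pos (R := ℝ) (M := Ed d)
    simp at this
    omega
  set σ := (volume : Measure (Ed d)).toSphere with hσ
  have key : ∀ i : Fin d,
      ∫⁻ θ : sphere (0 : Ed d) 1, (‖(⟪EuclideanSpace.single i (1 : ℝ), (θ : Ed d)⟫ : ℝ)‖₊ : ℝ≥0∞) ^ 2 ∂σ
      = ∫⁻ θ : sphere (0 : Ed d) 1, (‖(⟪u, (θ : Ed d)⟫ : ℝ)‖₊ : ℝ≥0∞) ^ 2 ∂σ := by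
    intro i
    set e : Ed d := EuclideanSpace.single i (1 : ℝ)
    have he : ‖e‖ = ‖u‖ := by simp [e, hu]
    set L := (ℝ ∙ (e - u))ᗮ.reflection
    have hL : L e = u := Submodule.reflection_sub he
    have := toSphere_map L (fun x => (‖(⟪u, x⟫ : ℝ)‖₊ : ℝ≥0∞) ^ 2) (by fun_prop)
    rw [← this]
    refine lintegral_congr fun θ => ?_
    rw [← hL, L.inner_map_map]
  have hsum : ∑ i : Fin d, ∫⁻ θ : sphere (0 : Ed d) 1,
      (‖(⟪EuclideanSpace.single i (1 : ℝ), (θ : Ed d)⟫ : ℝ)‖₊ : ℝ≥0∞) ^ 2 ∂σ = σ Set.univ := by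
    rw [← lintegral_finsetSum _ (fun i _ => by fun_prop), ← lintegral_one]
    refine lintegral_congr fun θ => ?_
    have h1 : ‖(θ : Ed d)‖ = 1 := by simp
    have h2 : ∑ i : Fin d, ‖(θ : Ed d) i‖₊ ^ 2 = 1 := by
      apply NNReal.coe_injective
      push_cast
      rw [← EuclideanSpace.norm_sq_eq, h1, one_pow]
    have h3 : ∀ i, (⟪EuclideanSpace.single i (1 : ℝ), (θ : Ed d)⟫ : ℝ) = (θ : Ed d) i := by
      intro i
      simp [EuclideanSpace.inner_single_left]
    simp only [h3]
    exact_mod_cast h2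
  simp only [key, Finset.sum_const, Finset.card_univ, Fintype.card_fin, nsmul_eq_mul] at hsum
  have hne : σ Set.univ ≠ 0 := by
    rw [Ne, Measure.measure_univ_eq_zero]
    exact Measure.toSphere_ne_zero _
  have hnt : σ Set.univ ≠ ∞ := measure_ne_top _ _
  rw [unifSphere, lintegral_smul_measure, smul_eq_mul, ← hσ]
  have hd0 : (d : ℝ≥0∞) ≠ 0 := by exact_mod_cast hd
  apply ENNReal.eq_inv_of_mul_eq_one_left
  rw [mul_assoc, mul_comm _ (d : ℝ≥0∞), hsum, ENNReal.inv_mul_cancel hne hnt]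

lemma line_repr {d : ℕ} (μ : Measure (Ed d)) (a u : Ed d) (hu : ‖u‖ = 1)
    (h : μ {x : Ed d | ∃ t : ℝ, x = a + t • u}ᶜ = 0) :
    (μ.map (fun x => (⟪x, u⟫ : ℝ))).map (fun s : ℝ => (a - (⟪a, u⟫ : ℝ) • u) + s • u) = μ := by
  rw [Measure.map_map (by fun_prop) (by fun_prop)]
  conv_rhs => rw [← Measure.map_id (μ := μ)]
  apply Measure.map_congr
  have : ∀ᵐ x ∂μ, x ∈ {x : Ed d | ∃ t : ℝ, x = a + t • u} := h
  filter_upwards [this] with x hx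
  obtain ⟨t, rfl⟩ := hx
  simp only [Function.comp, id, inner_add_left, inner_smul_left, real_inner_self_eq_norm_sq, hu]
  simp only [add_smul, one_pow, mul_one, conj_trivial]
  abel

/-- If μ and ν are supported on the same line {a + tu : t ∈ ℝ} with u a unit
vector, then SW_2²(μ, ν) = W_2²(μ, ν)/d. -/
theorem sw2sq_eq_w2sq_div_dim_of_supported_on_line (d : ℕ) (μ ν : Measure (Ed d))
    [IsProbabilityMeasure μ] [IsProbabilityMeasure ν]
    (hμ2 : FiniteSecondMoment μ) (hν2 : FiniteSecondMoment ν)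
    (a u : Ed d) (hu : ‖u‖ = 1)
    (hμline : μ {x : Ed d | ∃ t : ℝ, x = a + t • u}ᶜ = 0)
    (hνline : ν {x : Ed d | ∃ t : ℝ, x = a + t • u}ᶜ = 0) :
    SW2sq μ ν = W2sq μ ν / d := by
  set m := μ.map (fun x => (⟪x, u⟫ : ℝ)) with hm
  set n := ν.map (fun x => (⟪x, u⟫ : ℝ)) with hn
  have hψ : Measurable (fun x : Ed d => (⟪x, u⟫ : ℝ)) := by fun_prop
  have : IsProbabilityMeasure m := Measure.isProbabilityMeasure_map hψ.aemeasurable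
  have : IsProbabilityMeasure n := Measure.isProbabilityMeasure_map hψ.aemeasurable
  set c := a - (⟪a, u⟫ : ℝ) • u
  have hφ : Measurable (fun s : ℝ => c + s • u) := by fun_prop
  have eμ : m.map (fun s : ℝ => c + s • u) = μ := line_repr μ a u hu hμline
  have eν : n.map (fun s : ℝ => c + s • u) = ν := line_repr ν a u hu hνline
  have hu' : ‖u‖₊ = 1 := by
    apply NNReal.coe_injective
    simpa using hu
  have hW : W2sq μ ν = W2sq m n := by
    apply le_antisymm
    · have := W2sq_map_le m n _ hφ 1 one_ne_zero (by
        intro x y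
        rw [add_sub_add_left_eq_sub, ← sub_smul, nnnorm_smul, hu', mul_one, one_mul])
      rw [eμ, eν] at this
      simpa using this
    · have := W2sq_map_le μ ν _ hψ 1 one_ne_zero (by
        intro x y
        rw [← inner_sub_left]
        refine (nnnorm_inner_le_nnnorm (𝕜 := ℝ) _ _).trans ?_
        rw [hu', mul_one, one_mul])
      simpa using this
  have hS : ∀ θ : Ed d, W2sq (μ.map (proj θ)) (ν.map (proj θ))
      = (‖(⟪u, θ⟫ : ℝ)‖₊ : ℝ≥0∞) ^ 2 * W2sq m n := by
    intro θ
    have hp : Measurable (proj θ) := by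
      unfold proj
      fun_prop
    have hc : proj θ ∘ (fun s : ℝ => c + s • u) = fun s => (⟪c, θ⟫ : ℝ) + s * (⟪u, θ⟫ : ℝ) := by
      funext s
      simp [proj, inner_add_left, inner_smul_left]
    rw [← W2sq_affine m n ⟪c, θ⟫ ⟪u, θ⟫, ← hc, ← Measure.map_map hp hφ, ← Measure.map_map hp hφ,
      eμ, eν]
  unfold SW2sq
  simp only [hS]
  rw [lintegral_mul_const _ (by fun_prop), int_inner_sq d u hu, hW, mul_comm, div_eq_mul_inv]
end
end

section
/- Let μ, ν ∈ P_2(ℝ^d) with means m_μ = ∫ x dμ(x) and m_ν = ∫ x dν(x), and let μ̄ = (T_{m_μ})_#μ and ν̄ = (T_{m_ν})_#ν be their centered versions, where T_m(x) = x − m. Then SW_2²(μ, ν) = ‖m_μ − m_ν‖²/d + SW_2²(μ̄, ν̄). -/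
open MeasureTheory ENNReal Metric Filter
open scoped RealInnerProductSpace NNReal

noncomputable section

lemma aux_variance {Ω : Type*} [MeasurableSpace Ω] (P : Measure Ω) [IsProbabilityMeasure P]
    (Z : Ω → ℝ) (hZ : MemLp Z 2 P) (c : ℝ) (hc : ∫ ω, Z ω ∂P = c) :
    ∫⁻ ω, (‖Z ω‖₊ : ℝ≥0∞) ^ 2 ∂P
      = ENNReal.ofReal (c ^ 2) + ∫⁻ ω, (‖Z ω - c‖₊ : ℝ≥0∞) ^ 2 ∂P := by
  have key : ∀ x : ℝ, (‖x‖₊ : ℝ≥0∞) ^ 2 = ENNReal.ofReal (x ^ 2) := by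
    intro x
    rw [← enorm_eq_nnnorm, Real.enorm_eq_ofReal_abs, ← ENNReal.ofReal_pow (abs_nonneg _), sq_abs]
  have hZ1 : Integrable Z P := hZ.integrable (by norm_num)
  have hY : MemLp (fun ω => Z ω - c) 2 P := hZ.sub (memLp_const c)
  simp_rw [key]
  rw [← ofReal_integral_eq_lintegral_ofReal hZ.integrable_sq (ae_of_all _ fun _ => sq_nonneg _),
    ← ofReal_integral_eq_lintegral_ofReal hY.integrable_sq (ae_of_all _ fun _ => sq_nonneg _),
    ← ENNReal.ofReal_add (sq_nonneg _) (integral_nonneg fun _ => sq_nonneg _)]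
  congr 1
  have h1 : ∀ ω, (Z ω - c) ^ 2 = Z ω ^ 2 - (2 * c) * Z ω + c ^ 2 := fun ω => by ring
  simp_rw [h1]
  have h2 : Integrable (fun ω => Z ω ^ 2 - (2 * c) * Z ω) P :=
    hZ.integrable_sq.sub (hZ1.const_mul _)
  rw [integral_add h2 (integrable_const _),
    integral_sub hZ.integrable_sq (hZ1.const_mul _), integral_const_mul, hc]
  simp
  ring

lemma aux_cost (α β : Measure ℝ) [IsProbabilityMeasure α]
    (hα : MemLp id 2 α) (hβ : MemLp id 2 β) (a b : ℝ) (ha : ∫ x, x ∂α = a)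
    (hb : ∫ x, x ∂β = b) (π : Measure (ℝ × ℝ)) (h : IsCoupling π α β) :
    ∫⁻ p, (‖p.1 - p.2‖₊ : ℝ≥0∞) ^ 2 ∂π = ENNReal.ofReal ((a - b) ^ 2) +
      ∫⁻ p, (‖(p.1 - a) - (p.2 - b)‖₊ : ℝ≥0∞) ^ 2 ∂π := by
  obtain ⟨h1, h2⟩ := h
  have : IsProbabilityMeasure π := by
    constructor
    have := measure_univ (μ := α)
    rwa [← h1, Measure.map_apply measurable_fst MeasurableSet.univ, Set.preimage_univ] at this
  have m1 : MemLp (fun p : ℝ × ℝ => p.1) 2 π := by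
    rw [← h1] at hα
    exact hα.comp_of_map measurable_fst.aemeasurable
  have m2 : MemLp (fun p : ℝ × ℝ => p.2) 2 π := by
    rw [← h2] at hβ
    exact hβ.comp_of_map measurable_snd.aemeasurable
  have i1 : ∫ p, p.1 ∂π = a := by
    rw [← ha, ← h1, integral_map measurable_fst.aemeasurable]
    exact measurable_id.aestronglyMeasurable
  have i2 : ∫ p, p.2 ∂π = b := by
    rw [← hb, ← h2, integral_map measurable_snd.aemeasurable]
    exact measurable_id.aestronglyMeasurable
  have := aux_variance π (fun p => p.1 - p.2) (m1.sub m2) (a - b) (by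
    rw [integral_sub (m1.integrable (by norm_num)) (m2.integrable (by norm_num)), i1, i2])
  rw [this]
  have e : ∀ p : ℝ × ℝ, p.1 - p.2 - (a - b) = (p.1 - a) - (p.2 - b) := fun p => by ring
  simp_rw [e]

lemma aux_coupling_map (α β : Measure ℝ) (π : Measure (ℝ × ℝ)) (h : IsCoupling π α β) (a b : ℝ) :
    IsCoupling (π.map fun p => (p.1 - a, p.2 - b)) (α.map fun x => x - a)
      (β.map fun x => x - b) := by
  obtain ⟨h1, h2⟩ := h
  subst h1 h2
  constructor
  · rw [Measure.map_map (by fun_prop) (by fun_prop), Measure.map_map (by fun_prop) (by fun_prop)]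
    rfl
  · rw [Measure.map_map (by fun_prop) (by fun_prop), Measure.map_map (by fun_prop) (by fun_prop)]
    rfl

lemma aux_W2 (α β : Measure ℝ) [IsProbabilityMeasure α]
    (hα : MemLp id 2 α) (hβ : MemLp id 2 β) (a b : ℝ) (ha : ∫ x, x ∂α = a)
    (hb : ∫ x, x ∂β = b) :
    W2sq α β = ENNReal.ofReal ((a - b) ^ 2) +
      W2sq (α.map fun x => x - a) (β.map fun x => x - b) := by
  apply le_antisymm
  · unfold W2sq
    rw [ENNReal.add_iInf]
    refine le_iInf fun π => ?_
    rw [ENNReal.add_iInf]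
    refine le_iInf fun h => ?_
    have h' := aux_coupling_map _ _ _ h (-a) (-b)
    rw [Measure.map_map (by fun_prop) (by fun_prop), Measure.map_map (by fun_prop) (by fun_prop)]
      at h'
    have e : ∀ c : ℝ, ((fun x : ℝ => x - -c) ∘ fun x => x - c) = id := by
      intro c; ext x; simp
    rw [e, e, Measure.map_id, Measure.map_id] at h'
    refine (iInf₂_le (_ : Measure (ℝ × ℝ)) h').trans ?_
    rw [aux_cost α β hα hβ a b ha hb _ h']
    rw [lintegral_map (by fun_prop) (by fun_prop)]
    simp
  · refine le_iInf₂ fun π h => ?_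
    rw [aux_cost α β hα hβ a b ha hb _ h]
    gcongr
    unfold W2sq
    refine (iInf₂_le (_ : Measure (ℝ × ℝ)) (aux_coupling_map _ _ _ h a b)).trans ?_
    rw [lintegral_map (by fun_prop) (by fun_prop)]

def aux_g {d : ℕ} (L : Ed d ≃ₗᵢ[ℝ] Ed d) (θ : sphere (0 : Ed d) 1) : sphere (0 : Ed d) 1 :=
  ⟨L θ, by simp⟩

lemma aux_g_meas {d : ℕ} (L : Ed d ≃ₗᵢ[ℝ] Ed d) : Measurable (aux_g L) :=
  (L.continuous.measurable.comp measurable_subtype_coe).subtype_mk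

open scoped Pointwise in
lemma aux_sphere_inv {d : ℕ} (L : Ed d ≃ₗᵢ[ℝ] Ed d) :
    ((volume : Measure (Ed d)).toSphere).map (aux_g L) = (volume : Measure (Ed d)).toSphere := by
  ext s hs
  rw [Measure.map_apply (aux_g_meas L) hs, Measure.toSphere_apply' _ (aux_g_meas L hs),
    Measure.toSphere_apply' _ hs]
  congr 1
  rw [← L.measurePreserving.measure_preimage_emb L.toHomeomorph.measurableEmbedding
    (Set.Ioo (0 : ℝ) 1 • (Subtype.val '' s))]
  congr 1
  ext x
  simp only [Set.mem_smul, Set.mem_preimage, Set.mem_image]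
  constructor
  · rintro ⟨r, hr, _, ⟨θ, hθ, rfl⟩, rfl⟩
    exact ⟨r, hr, _, ⟨_, hθ, rfl⟩, by simp [aux_g]⟩
  · rintro ⟨r, hr, _, ⟨θ, hθ, rfl⟩, h⟩
    refine ⟨r, hr, _, ⟨aux_g L.symm θ, ?_, rfl⟩, ?_⟩
    · have : aux_g L (aux_g L.symm θ) = θ := by
        ext1; simp [aux_g]
      simpa [this] using hθ
    · apply L.injective
      simp [aux_g, h]

lemma aux_unif_inv {d : ℕ} (L : Ed d ≃ₗᵢ[ℝ] Ed d) :
    (unifSphere d).map (aux_g L) = unifSphere d := by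
  unfold unifSphere
  rw [Measure.map_smul, aux_sphere_inv]

lemma aux_I_eq {d : ℕ} (u v : Ed d) (h : ‖u‖ = ‖v‖) :
    ∫⁻ θ : sphere (0 : Ed d) 1, ENNReal.ofReal (⟪u, (θ : Ed d)⟫ ^ 2) ∂(unifSphere d) =
    ∫⁻ θ : sphere (0 : Ed d) 1, ENNReal.ofReal (⟪v, (θ : Ed d)⟫ ^ 2) ∂(unifSphere d) := by
  set L := (ℝ ∙ (u - v))ᗮ.reflection with hL
  have hLu : L u = v := Submodule.reflection_sub h
  conv_rhs => rw [← aux_unif_inv L]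
  rw [lintegral_map (by fun_prop) (aux_g_meas L)]
  simp only [aux_g, ← hLu, LinearIsometryEquiv.inner_map_map]

lemma aux_I {d : ℕ} (hd : d ≠ 0) (m : Ed d) :
    ∫⁻ θ : sphere (0 : Ed d) 1, ENNReal.ofReal (⟪m, (θ : Ed d)⟫ ^ 2) ∂(unifSphere d) =
    ENNReal.ofReal (‖m‖ ^ 2) / d := by
  have hd' : (d : ℝ≥0∞) ≠ 0 := by exact_mod_cast hd
  have : Nonempty (Fin d) := ⟨⟨0, Nat.pos_of_ne_zero hd⟩⟩
  have hprob : unifSphere d Set.univ = 1 := by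
    unfold unifSphere
    rw [Measure.smul_apply, smul_eq_mul]
    apply ENNReal.inv_mul_cancel
    · rw [Ne, Measure.measure_univ_eq_zero]
      exact Measure.toSphere_ne_zero _
    · exact measure_ne_top _ _
  rw [ENNReal.eq_div_iff hd' (by simp)]
  calc (d : ℝ≥0∞) * _ = ∑ i : Fin d, ∫⁻ θ : sphere (0 : Ed d) 1,
        ENNReal.ofReal (⟪‖m‖ • EuclideanSpace.single i (1 : ℝ), (θ : Ed d)⟫ ^ 2) ∂(unifSphere d) := by
        rw [Finset.sum_congr rfl (fun i _ => aux_I_eq (‖m‖ • EuclideanSpace.single i (1 : ℝ)) m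
          (by simp [norm_smul]))]
        simp
    _ = ∫⁻ θ : sphere (0 : Ed d) 1, ENNReal.ofReal (‖m‖ ^ 2) ∂(unifSphere d) := by
        rw [← lintegral_finsetSum _ (fun i _ => by fun_prop)]
        congr 1
        ext θ
        rw [← ENNReal.ofReal_sum_of_nonneg (fun i _ => sq_nonneg _)]
        congr 1
        have hθ : ∑ i, (θ : Ed d) i ^ 2 = 1 := by
          have := EuclideanSpace.real_norm_sq_eq (θ : Ed d)
          rw [← this]; simp
        simp only [inner_smul_left, EuclideanSpace.inner_single_left, mul_pow]
        rw [← Finset.mul_sum]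
        simp [hθ]
    _ = _ := by rw [lintegral_const, hprob, mul_one]

lemma aux_memLp {d : ℕ} (μ : Measure (Ed d)) (h : FiniteSecondMoment μ) :
    MemLp (fun x : Ed d => x) 2 μ := by
  refine ⟨measurable_id.aestronglyMeasurable, ?_⟩
  rw [eLpNorm_lt_top_iff_lintegral_rpow_enorm_lt_top (by norm_num) (by norm_num)]
  unfold FiniteSecondMoment at h
  simpa [enorm_eq_nnnorm] using h

lemma aux_proj_meas {d : ℕ} (θ : Ed d) : Measurable (proj θ) := by
  unfold proj; fun_prop

lemma aux_proj {d : ℕ} (μ : Measure (Ed d)) [IsProbabilityMeasure μ]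
    (h : FiniteSecondMoment μ) (θ : Ed d) :
    MemLp id 2 (μ.map (proj θ)) ∧ ∫ x, x ∂(μ.map (proj θ)) = ⟪∫ x, x ∂μ, θ⟫ ∧
    (μ.map fun x => x - ∫ x, x ∂μ).map (proj θ) =
      (μ.map (proj θ)).map (fun x => x - ⟪∫ x, x ∂μ, θ⟫) := by
  have hm := aux_memLp μ h
  refine ⟨?_, ?_, ?_⟩
  · rw [memLp_map_measure_iff measurable_id.aestronglyMeasurable (aux_proj_meas θ).aemeasurable]
    exact hm.inner_const θ
  · rw [integral_map (aux_proj_meas θ).aemeasurable (f := fun x : ℝ => x)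
      measurable_id.aestronglyMeasurable]
    unfold proj
    simp_rw [real_inner_comm θ]
    exact integral_inner (hm.integrable (by norm_num)) θ
  · rw [Measure.map_map (aux_proj_meas θ) (by fun_prop),
      Measure.map_map (by fun_prop) (aux_proj_meas θ)]
    congr 1
    ext x
    simp [proj, inner_sub_left]

/-- The squared Sliced-Wasserstein distance decomposes as the squared distance
between the means divided by d plus the squared Sliced-Wasserstein distance between the
centered measures. -/
theorem sw2sq_mean_decomposition (d : ℕ) (μ ν : Measure (Ed d))
    [IsProbabilityMeasure μ] [IsProbabilityMeasure ν]
    (hμ2 : FiniteSecondMoment μ) (hν2 : FiniteSecondMoment ν) :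
    SW2sq μ ν = ENNReal.ofReal (‖(∫ x, x ∂μ) - ∫ x, x ∂ν‖ ^ 2) / d +
      SW2sq (μ.map fun x => x - ∫ x, x ∂μ) (ν.map fun x => x - ∫ x, x ∂ν) := by
  rcases eq_or_ne d 0 with rfl | hd
  · have hs : IsEmpty (sphere (0 : Ed 0) 1) := by
      refine ⟨fun θ => ?_⟩
      have h1 : ‖(θ : Ed 0)‖ = 1 := by simp
      rw [Subsingleton.elim (θ : Ed 0) 0] at h1
      simp at h1
    have hn : ‖(∫ x, x ∂μ) - ∫ x, x ∂ν‖ = 0 := by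
      rw [Subsingleton.elim ((∫ x, x ∂μ) - ∫ x, x ∂ν) 0, norm_zero]
    unfold SW2sq
    rw [hn]
    simp [lintegral_of_isEmpty]
  · rw [← aux_I hd]
    unfold SW2sq
    rw [← lintegral_add_left (by fun_prop)]
    congr 1
    ext θ
    obtain ⟨a1, a2, a3⟩ := aux_proj μ hμ2 (θ : Ed d)
    obtain ⟨b1, b2, b3⟩ := aux_proj ν hν2 (θ : Ed d)
    have : IsProbabilityMeasure (μ.map (proj (θ : Ed d))) :=
      Measure.isProbabilityMeasure_map (aux_proj_meas _).aemeasurable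
    rw [a3, b3, aux_W2 _ _ a1 b1 _ _ a2 b2, inner_sub_left]
end
end
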